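/- Let Z = {(x₁,x₂,x₃,x₄) ∈ ℂ⁴ : x₄³ = x₁x₂x₃(x₁+x₂+x₃)}, equipped with the subspace topology from ℂ⁴. Then the singular cohomology groups with rational coefficients H²(Z ∖ {(0,0,0,0)}; ℚ) and H³(Z ∖ {(0,0,0,0)}; ℚ) both vanish. -/

import Mathlib

noncomputable section
open CategoryTheory AlgebraicTopology

/-- The (unnormalized) singular chain complex of a topological space with
`ℚ`-coefficients: the alternating face map complex of the free simplicial `ℚ`-module
on the singular simplicial set. -/
def singularChainComplex (X : Type) [TopologicalSpace X] : ChainComplex (ModuleCat ℚ) ℕ :=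
  (AlgebraicTopology.alternatingFaceMapComplex (ModuleCat ℚ)).obj
    (((SimplicialObject.whiskering _ _).obj (ModuleCat.free ℚ)).obj
      (TopCat.toSSet.obj (TopCat.of X)))

/-- The singular cochain complex with `ℚ`-coefficients, obtained by applying the
contravariant functor `Hom(-, ℚ)` to the singular chain complex; its homology in
degree `n` is the singular cohomology `Hⁿ(X; ℚ)`. -/
def singularCochainComplex (X : Type) [TopologicalSpace X] :
    HomologicalComplex (ModuleCat ℚ) (ComplexShape.down ℕ).symm :=
  (((linearYoneda ℚ (ModuleCat ℚ)).obj (ModuleCat.of ℚ ℚ)).mapHomologicalComplex _).obj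
    (singularChainComplex X).op

/-- The punctured affine hypersurface
`Z ∖ {0} = {x ∈ ℂ⁴ : x₄³ = x₁x₂x₃(x₁+x₂+x₃)} ∖ {(0,0,0,0)}`, with the subspace
topology from `ℂ⁴`. -/
def ZPunct : Type :=
  {x : Fin 4 → ℂ // x 3 ^ 3 = x 0 * x 1 * x 2 * (x 0 + x 1 + x 2) ∧ x ≠ 0}

instance : TopologicalSpace ZPunct := instTopologicalSpaceSubtype

/-!
The projection `(x₁, x₂, x₃, x₄) ↦ (x₁, x₂, x₃)` exhibits `ℂ³ ∖ {0}` as the quotient of `Z ∖ {0}` by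
the deck transformation of order three that multiplies `x₄` by a primitive cube root of unity. The
quotient has the rational homology of the base: the mapping cone comparing invariant chains upstairs
with chains downstairs is acyclic over every convex open set on which one of the four linear forms
`x₁`, `x₂`, `x₃`, `x₁ + x₂ + x₃` does not vanish and which the other forms identify with a product.
Indeed such a set contracts along straight lines to a point at which every form that vanishes
somewhere on the set is zero, so that the contraction lifts through the cube root; Mayer–Vietoris
then spreads acyclicity to all of `ℂ³ ∖ {0}`, whose reduced homology vanishes below degree five.

The deck transformation belongs to the circle action `a • (x, y) = (a³x, a⁴y)`, hence is homotopic
to the identity. Averaging over its powers therefore replaces a rational cycle on `Z ∖ {0}` by a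
homologous invariant one, which bounds. The cohomology follows by duality.
-/

universe u v w

/-- An augmented semisimplicial set without its simplicial identities: `obj k` is the set of
simplices with `k` vertices, and `face i` deletes the `i`-th vertex. Indexing by the number of
vertices makes the empty simplex, hence reduced homology, part of the complex. -/
structure FaceSystem where
  obj : ℕ → Type u
  face : ∀ {k}, Fin (k + 1) → obj (k + 1) → obj k

namespace FaceSystem

/-- A family of maps of simplices commuting with the faces. -/
@[ext]
structure Hom (F : FaceSystem.{u}) (G : FaceSystem.{v}) where
  app : ∀ {k}, F.obj k → G.obj k
  app_face : ∀ {k} (i : Fin (k + 1)) (s : F.obj (k + 1)), app (F.face i s) = G.face i (app s)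

/-- Composition of maps of face systems. -/
def Hom.comp {F : FaceSystem.{u}} {G : FaceSystem.{v}} {K : FaceSystem.{w}} (ψ : Hom G K)
    (φ : Hom F G) : Hom F K where
  app s := ψ.app (φ.app s)
  app_face i s := by rw [φ.app_face, ψ.app_face]

/-- The free module on the simplices of all dimensions at once; the grading is recorded by
submodules instead of by the type. -/
abbrev Chains (R : Type*) [CommRing R] (F : FaceSystem.{u}) := (Σ k, F.obj k) →₀ R

variable {R : Type*} [CommRing R] {F : FaceSystem.{u}} {G : FaceSystem.{v}} {K : FaceSystem.{w}}

/-- A simplex as a chain. -/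
def simplex {k : ℕ} (s : F.obj k) : Chains R F := Finsupp.single ⟨k, s⟩ 1

theorem chains_hom_ext {N : Type*} [AddCommGroup N] [Module R N] {f g : Chains R F →ₗ[R] N}
    (h : ∀ (k : ℕ) (s : F.obj k), f (simplex s) = g (simplex s)) : f = g :=
  Finsupp.lhom_ext' fun s => LinearMap.ext_ring (h s.1 s.2)

/-- The alternating sum of the faces; it vanishes on simplices without vertices. -/
def boundary : Chains R F →ₗ[R] Chains R F :=
  Finsupp.linearCombination R fun
    | ⟨0, _⟩ => 0
    | ⟨k + 1, s⟩ => ∑ i : Fin (k + 1), (-1 : R) ^ (i : ℕ) • simplex (F.face i s)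

theorem boundary_simplex_zero (s : F.obj 0) : boundary (simplex s : Chains R F) = 0 := by
  simp [boundary, simplex]

theorem boundary_simplex_succ {k : ℕ} (s : F.obj (k + 1)) :
    boundary (simplex s : Chains R F) =
      ∑ i : Fin (k + 1), (-1 : R) ^ (i : ℕ) • simplex (F.face i s) := by
  simp [boundary, simplex]

/-- The chain map induced by a map of face systems. -/
def Hom.map (φ : Hom F G) : Chains R F →ₗ[R] Chains R G :=
  Finsupp.lmapDomain R R fun s => ⟨s.1, φ.app s.2⟩

theorem Hom.map_simplex (φ : Hom F G) {k : ℕ} (s : F.obj k) :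
    φ.map (simplex s : Chains R F) = simplex (φ.app s) :=
  Finsupp.mapDomain_single

theorem Hom.map_comp (ψ : Hom G K) (φ : Hom F G) (c : Chains R F) :
    (ψ.comp φ).map c = ψ.map (φ.map c) := by
  suffices h : (ψ.comp φ).map = ψ.map (R := R) ∘ₗ φ.map from LinearMap.congr_fun h c
  exact chains_hom_ext fun k s => by simp only [LinearMap.comp_apply, map_simplex, Hom.comp]

theorem Hom.boundary_map (φ : Hom F G) (c : Chains R F) :
    boundary (φ.map c) = φ.map (boundary c) := by
  suffices h : boundary ∘ₗ φ.map = φ.map (R := R) ∘ₗ boundary from LinearMap.congr_fun h c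
  refine chains_hom_ext fun k s => ?_
  cases k with
  | zero => simp only [LinearMap.comp_apply, map_simplex, boundary_simplex_zero, map_zero]
  | succ k => simp only [LinearMap.comp_apply, map_simplex, boundary_simplex_succ, map_sum,
      map_smul, φ.app_face]

/-- The chains all of whose simplices lie in `S`. -/
abbrev chainsOn (R : Type*) [CommRing R] (S : Set (Σ k, F.obj k)) : Submodule R (Chains R F) :=
  Finsupp.supported R R S

/-- The simplices with `k` vertices. -/
def ofLength (k : ℕ) : Set (Σ k, F.obj k) := {s | s.1 = k}

theorem simplex_mem_chainsOn {S : Set (Σ k, F.obj k)} {k : ℕ} {s : F.obj k} (hs : ⟨k, s⟩ ∈ S) :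
    simplex s ∈ chainsOn R S :=
  Finsupp.single_mem_supported R 1 hs

theorem map_mem_of_mem_chainsOn {N : Type*} [AddCommGroup N] [Module R N] {M : Submodule R N}
    {S : Set (Σ k, F.obj k)} (f : Chains R F →ₗ[R] N)
    (hf : ∀ (k : ℕ) (s : F.obj k), ⟨k, s⟩ ∈ S → f (simplex s) ∈ M) {c : Chains R F}
    (hc : c ∈ chainsOn R S) : f c ∈ M := by
  suffices h : chainsOn R S ≤ M.comap f from h hc
  rw [chainsOn, Finsupp.supported_eq_span_single, Submodule.span_le, Set.image_subset_iff]
  exact fun s hs => hf s.1 s.2 hs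

theorem map_mem_ofLength (φ : Hom F G) {k : ℕ} {c : Chains R F} (hc : c ∈ chainsOn R (ofLength k)) :
    φ.map c ∈ chainsOn R (ofLength k) := by
  refine map_mem_of_mem_chainsOn _ (fun l s hs => ?_) hc
  rw [Hom.map_simplex]
  exact simplex_mem_chainsOn hs

theorem boundary_mem_ofLength {k : ℕ} (s : F.obj (k + 1)) :
    boundary (simplex s) ∈ chainsOn R (F := F) (ofLength k) := by
  rw [boundary_simplex_succ]
  exact sum_mem fun i _ => Submodule.smul_mem _ _ (simplex_mem_chainsOn rfl)

end FaceSystem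

section Tuples

open FaceSystem

variable {R : Type*} [CommRing R] {A : Type u} {B : Type v} {A' B' : Type*}

/-- The tuples of points of `A`, as a face system; the face maps omit an entry. -/
abbrev tuples (A : Type u) : FaceSystem.{u} where
  obj k := Fin k → A
  face i v := v ∘ i.succAbove

/-- A map of sets acts on tuples entrywise. -/
def tuplesMap (f : A → B) : Hom (tuples A) (tuples B) where
  app v := f ∘ v
  app_face _ _ := rfl

/-- Prepend the point `a` to every tuple of a chain. -/
def cone (a : A) : Chains R (tuples A) →ₗ[R] Chains R (tuples A) :=
  Finsupp.lmapDomain R R fun s => ⟨s.1 + 1, Fin.cons a s.2⟩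

theorem cone_simplex (a : A) {k : ℕ} (v : Fin k → A) :
    cone a (simplex v : Chains R (tuples A)) =
      simplex (F := tuples A) (Fin.cons a v : Fin (k + 1) → A) :=
  Finsupp.mapDomain_single

theorem simplex_eq_cone {k : ℕ} (v : Fin (k + 1) → A) :
    (simplex v : Chains R (tuples A)) = cone (v 0) (simplex (Fin.tail v)) := by
  rw [cone_simplex, Fin.cons_self_tail]

theorem map_cone (f : A → B) (a : A) (c : Chains R (tuples A)) :
    (tuplesMap f).map (cone a c) = cone (f a) ((tuplesMap f).map c) := by
  suffices h : (tuplesMap f).map ∘ₗ cone a = cone (R := R) (f a) ∘ₗ (tuplesMap f).map from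
    LinearMap.congr_fun h c
  refine chains_hom_ext fun k v => ?_
  simp only [LinearMap.comp_apply, cone_simplex, Hom.map_simplex]
  exact congrArg simplex (Fin.comp_cons f a v)

theorem boundary_cone (a : A) (c : Chains R (tuples A)) :
    boundary (cone a c) = c - cone a (boundary c) := by
  suffices h : boundary ∘ₗ cone (R := R) a = LinearMap.id - cone a ∘ₗ boundary from
    LinearMap.congr_fun h c
  refine chains_hom_ext fun k v => ?_
  simp only [LinearMap.comp_apply, LinearMap.sub_apply, LinearMap.id_apply, cone_simplex,
    boundary_simplex_succ]
  rw [Fin.sum_univ_succ, sub_eq_add_neg]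
  congr 1
  · simp
  cases k with
  | zero => simp [boundary_simplex_zero]
  | succ k =>
    rw [boundary_simplex_succ, map_sum, ← Finset.sum_neg_distrib]
    refine Finset.sum_congr rfl fun i _ => ?_
    rw [map_smul, cone_simplex, Fin.val_succ, pow_succ, mul_neg_one, neg_smul]
    congr 3
    funext j
    cases j using Fin.cases <;> simp

theorem boundary_boundary_tuples (c : Chains R (tuples A)) : boundary (boundary c) = 0 := by
  suffices h : boundary ∘ₗ boundary = (0 : Chains R (tuples A) →ₗ[R] _) from
    LinearMap.congr_fun h c
  refine chains_hom_ext fun k v => ?_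
  change boundary (boundary (simplex v)) = 0
  induction k with
  | zero => rw [boundary_simplex_zero, map_zero]
  | succ k ih =>
    rw [simplex_eq_cone, boundary_cone, map_sub, boundary_cone, ih, map_zero, sub_zero, sub_self]

/-- The values of `coneHomotopy` on tuples. -/
def coneHomotopyAux (f : Chains R (tuples A) →ₗ[R] Chains R (tuples B))
    (b : ∀ {k}, (Fin (k + 1) → A) → B) : ∀ k, (Fin k → A) → Chains R (tuples B)
  | 0, _ => 0
  | k + 1, v => cone (b v) (f (simplex v) -
      ∑ i : Fin (k + 1), (-1 : R) ^ (i : ℕ) • coneHomotopyAux f b k (v ∘ i.succAbove))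

/-- The operator `h` defined recursively by `h v = cone (b v) (f v - h (∂ v))`, which is how an
acyclic-carrier homotopy is built from a choice of apex `b v` for every tuple `v`. -/
def coneHomotopy (f : Chains R (tuples A) →ₗ[R] Chains R (tuples B))
    (b : ∀ {k}, (Fin (k + 1) → A) → B) : Chains R (tuples A) →ₗ[R] Chains R (tuples B) :=
  Finsupp.linearCombination R fun s => coneHomotopyAux f b s.1 s.2

theorem coneHomotopy_simplex_zero (f : Chains R (tuples A) →ₗ[R] Chains R (tuples B))
    (b : ∀ {k}, (Fin (k + 1) → A) → B) (v : Fin 0 → A) :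
    coneHomotopy f b (simplex v) = 0 := by
  simp [coneHomotopy, simplex, coneHomotopyAux]

theorem coneHomotopy_simplex_succ (f : Chains R (tuples A) →ₗ[R] Chains R (tuples B))
    (b : ∀ {k}, (Fin (k + 1) → A) → B) {k : ℕ} (v : Fin (k + 1) → A) :
    coneHomotopy f b (simplex v) =
      cone (b v) (f (simplex v) - coneHomotopy f b (boundary (simplex v))) := by
  simp [coneHomotopy, simplex, boundary, coneHomotopyAux]

theorem map_coneHomotopy {f : Chains R (tuples A) →ₗ[R] Chains R (tuples B)}
    {b : ∀ {k}, (Fin (k + 1) → A) → B} {f' : Chains R (tuples A') →ₗ[R] Chains R (tuples B')}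
    {b' : ∀ {k}, (Fin (k + 1) → A') → B'} (φ : A → A') (ψ : B → B')
    (hf : ∀ c, (tuplesMap ψ).map (f c) = f' ((tuplesMap φ).map c))
    (hb : ∀ {k} (v : Fin (k + 1) → A), ψ (b v) = b' (φ ∘ v)) (c : Chains R (tuples A)) :
    (tuplesMap ψ).map (coneHomotopy f b c) = coneHomotopy f' b' ((tuplesMap φ).map c) := by
  suffices h : (tuplesMap ψ).map ∘ₗ coneHomotopy f b = coneHomotopy f' b' ∘ₗ (tuplesMap φ).map from
    LinearMap.congr_fun h c
  refine chains_hom_ext fun k v => ?_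
  change (tuplesMap ψ).map (coneHomotopy f b (simplex v)) =
    coneHomotopy f' b' ((tuplesMap φ).map (simplex v))
  induction k with
  | zero => simp only [Hom.map_simplex, coneHomotopy_simplex_zero, map_zero]
  | succ k ih =>
    rw [coneHomotopy_simplex_succ, map_cone, map_sub, hf, Hom.map_simplex,
      coneHomotopy_simplex_succ, ← Hom.map_simplex, Hom.boundary_map, boundary_simplex_succ]
    simp only [map_sum, map_smul, ih, hb]
    rfl

theorem cone_mem_ofLength (a : A) {k : ℕ} {c : Chains R (tuples A)}
    (hc : c ∈ chainsOn R (ofLength k)) : cone a c ∈ chainsOn R (ofLength (k + 1)) := by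
  refine map_mem_of_mem_chainsOn _ (fun l v (hl : l = k) => ?_) hc
  rw [cone_simplex]
  exact simplex_mem_chainsOn (congrArg Nat.succ hl)

theorem coneHomotopy_mem_ofLength {f : Chains R (tuples A) →ₗ[R] Chains R (tuples B)}
    (hf : ∀ k c, c ∈ chainsOn R (ofLength k) → f c ∈ chainsOn R (ofLength k))
    (b : ∀ {k}, (Fin (k + 1) → A) → B) {k : ℕ} {c : Chains R (tuples A)}
    (hc : c ∈ chainsOn R (ofLength k)) : coneHomotopy f b c ∈ chainsOn R (ofLength (k + 1)) := by
  induction k generalizing c with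
  | zero =>
    refine map_mem_of_mem_chainsOn _ ?_ hc
    rintro _ v rfl
    rw [coneHomotopy_simplex_zero]
    exact zero_mem _
  | succ k ih =>
    refine map_mem_of_mem_chainsOn _ ?_ hc
    rintro _ v rfl
    rw [coneHomotopy_simplex_succ]
    exact cone_mem_ofLength _ (sub_mem (hf _ _ (simplex_mem_chainsOn rfl))
      (ih (boundary_mem_ofLength v)))

/-- The failure `f - ∂h - h∂` of `h = coneHomotopy f b` to be a contraction of `f`. -/
def coneDefect (f : Chains R (tuples A) →ₗ[R] Chains R (tuples B))
    (b : ∀ {k}, (Fin (k + 1) → A) → B) : Chains R (tuples A) →ₗ[R] Chains R (tuples B) :=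
  f - boundary ∘ₗ coneHomotopy f b - coneHomotopy f b ∘ₗ boundary

theorem coneDefect_simplex_zero (f : Chains R (tuples A) →ₗ[R] Chains R (tuples B))
    (b : ∀ {k}, (Fin (k + 1) → A) → B) (v : Fin 0 → A) :
    coneDefect f b (simplex v) = f (simplex v) := by
  simp [coneDefect, coneHomotopy_simplex_zero, boundary_simplex_zero]

theorem coneDefect_simplex_succ {f : Chains R (tuples A) →ₗ[R] Chains R (tuples B)}
    (hf : ∀ c, boundary (f c) = f (boundary c)) (b : ∀ {k}, (Fin (k + 1) → A) → B) {k : ℕ}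
    (v : Fin (k + 1) → A) :
    coneDefect f b (simplex v) = cone (b v) (coneDefect f b (boundary (simplex v))) := by
  simp only [coneDefect, LinearMap.sub_apply, LinearMap.comp_apply, coneHomotopy_simplex_succ,
    boundary_cone, map_sub, hf, boundary_boundary_tuples, map_zero]
  abel

theorem coneDefect_eq_zero {f : Chains R (tuples A) →ₗ[R] Chains R (tuples B)}
    (hf : ∀ c, boundary (f c) = f (boundary c)) (hf₀ : ∀ v : Fin 0 → A, f (simplex v) = 0)
    (b : ∀ {k}, (Fin (k + 1) → A) → B) : coneDefect f b = 0 := by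
  refine chains_hom_ext fun k v => ?_
  rw [LinearMap.zero_apply]
  induction k with
  | zero => rw [coneDefect_simplex_zero, hf₀]
  | succ k ih => simp [coneDefect_simplex_succ hf, boundary_simplex_succ, ih]

end Tuples

section Singular

open FaceSystem

/-- The geometric simplex with `k` vertices, of dimension `k - 1`. -/
abbrev Simplex (k : ℕ) := stdSimplex ℝ (Fin k)

instance isEmpty_simplex_zero : IsEmpty (Simplex 0) :=
  Set.isEmpty_coe_sort.2 (stdSimplex_of_isEmpty_index ℝ (Fin 0))

/-- The affine map of simplices sending the `i`-th vertex to `v i`. -/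
def affineSimplex {k n : ℕ} (v : Fin k → Simplex n) : C(Simplex k, Simplex n) where
  toFun t := ⟨∑ i, t i • (v i : Fin n → ℝ), (convex_stdSimplex ℝ (Fin n)).sum_mem
    (fun i _ => stdSimplex.zero_le t i) (stdSimplex.sum_eq_one t) fun i _ => (v i).2⟩
  continuous_toFun := by
    have hcoord (i : Fin k) : Continuous fun t : Simplex k => t i :=
      (continuous_apply i).comp continuous_subtype_val
    exact (continuous_finsetSum _ fun i _ => (hcoord i).smul continuous_const).subtype_mk _

theorem affineSimplex_apply {k n : ℕ} (v : Fin k → Simplex n) (t : Simplex k) (j : Fin n) :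
    affineSimplex v t j = ∑ i, t i * v i j := by
  change (∑ i, t i • (v i : Fin n → ℝ)) j = _
  rw [Finset.sum_apply]
  rfl

theorem affineSimplex_comp {k m n : ℕ} (u : Fin m → Simplex n) (v : Fin k → Simplex m) :
    (affineSimplex u).comp (affineSimplex v) = affineSimplex (affineSimplex u ∘ v) := by
  ext t : 1
  refine stdSimplex.ext (funext fun j => ?_)
  simp only [ContinuousMap.comp_apply, affineSimplex_apply, Function.comp_apply, Finset.sum_mul,
    Finset.mul_sum]
  rw [Finset.sum_comm]
  exact Finset.sum_congr rfl fun i _ => Finset.sum_congr rfl fun l _ => mul_assoc _ _ _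

theorem affineSimplex_map {k l n : ℕ} (v : Fin l → Simplex n) (f : Fin k → Fin l)
    (t : Simplex k) : affineSimplex v (stdSimplex.map f t) = affineSimplex (v ∘ f) t := by
  refine stdSimplex.ext (funext fun j => ?_)
  simp only [affineSimplex_apply, stdSimplex.map_coe, FunOnFinite.linearMap_apply_apply,
    Finset.sum_mul, Function.comp_apply]
  rw [← Finset.sum_fiberwise Finset.univ f]
  exact Finset.sum_congr rfl fun l _ => Finset.sum_congr rfl fun i hi => by
    rw [(Finset.mem_filter.1 hi).2]

theorem affineSimplex_vertex {k n : ℕ} (v : Fin k → Simplex n) (i : Fin k) :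
    affineSimplex v (stdSimplex.vertex i) = v i := by
  refine stdSimplex.ext (funext fun j => ?_)
  simp [affineSimplex_apply, Pi.single_apply]

theorem affineSimplex_vertices (n : ℕ) :
    affineSimplex (stdSimplex.vertex : Fin n → Simplex n) = ContinuousMap.id _ := by
  ext t : 1
  refine stdSimplex.ext (funext fun j => ?_)
  simp [affineSimplex_apply, Pi.single_apply]

variable {R : Type*} [CommRing R] {X : Type u} {Y : Type v} {W : Type w} [TopologicalSpace X]
  [TopologicalSpace Y] [TopologicalSpace W]

/-- The singular simplices of `X`, including the empty one. -/
abbrev singular (X : Type u) [TopologicalSpace X] : FaceSystem.{u} where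
  obj k := C(Simplex k, X)
  face i s := s.comp ⟨stdSimplex.map i.succAbove, stdSimplex.continuous_map _⟩

/-- Postcomposition of singular simplices with a continuous map. -/
def singularMap (f : C(X, Y)) : Hom (singular X) (singular Y) where
  app s := f.comp s
  app_face _ _ := rfl

theorem singularMap_id (c : Chains R (singular X)) :
    (singularMap (ContinuousMap.id X)).map c = c :=
  Finsupp.mapDomain_id

theorem singularMap_comp (g : C(Y, W)) (f : C(X, Y)) (c : Chains R (singular X)) :
    (singularMap (g.comp f)).map c = (singularMap g).map ((singularMap f).map c) :=
  Hom.map_comp (singularMap g) (singularMap f) c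

/-- The tuples of points of a simplex, viewed as affine simplices and pushed forward along a
singular simplex `s`. -/
def realize {n : ℕ} (s : C(Simplex n, X)) : Hom (tuples (Simplex n)) (singular X) where
  app v := s.comp (affineSimplex v)
  app_face i v := by
    ext t
    exact congrArg s (affineSimplex_map v i.succAbove t).symm

theorem realize_comp_affineSimplex {m n : ℕ} (s : C(Simplex n, X)) (u : Fin m → Simplex n)
    (a : Chains R (tuples (Simplex m))) :
    (realize (s.comp (affineSimplex u))).map a =
      (realize s).map ((tuplesMap (affineSimplex u)).map a) := by
  rw [← Hom.map_comp]
  congr 2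
  refine Hom.ext (funext fun k => funext fun v => ?_)
  exact (s.comp_assoc _ _).trans (congrArg s.comp (affineSimplex_comp u v))

theorem singularMap_realize {n : ℕ} (f : C(X, Y)) (s : C(Simplex n, X))
    (a : Chains R (tuples (Simplex n))) :
    (singularMap f).map ((realize s).map a) = (realize (f.comp s)).map a :=
  (Hom.map_comp (singularMap f) (realize s) a).symm

theorem simplex_eq_realize {n : ℕ} (s : C(Simplex n, X)) :
    (simplex s : Chains R (singular X)) =
      (realize s).map (simplex (stdSimplex.vertex : Fin n → Simplex n)) := by
  rw [Hom.map_simplex]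
  simp only [realize, affineSimplex_vertices, ContinuousMap.comp_id]

theorem boundary_boundary_singular (c : Chains R (singular X)) : boundary (boundary c) = 0 := by
  suffices h : boundary ∘ₗ boundary = (0 : Chains R (singular X) →ₗ[R] _) from
    LinearMap.congr_fun h c
  refine chains_hom_ext fun k s => ?_
  rw [LinearMap.comp_apply, simplex_eq_realize, Hom.boundary_map, Hom.boundary_map,
    boundary_boundary_tuples, map_zero, LinearMap.zero_apply]

end Singular

section Subdivision

open FaceSystem Filter

variable {R : Type*} [CommRing R] {A : Type u} {B : Type v} {X : Type u} {Y : Type v}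
  [TopologicalSpace X] [TopologicalSpace Y]

/-- The homotopy between the identity and barycentric subdivision, on affine simplices. -/
def barycentricHomotopy {n : ℕ} :
    Chains R (tuples (Simplex n)) →ₗ[R] Chains R (tuples (Simplex n)) :=
  coneHomotopy LinearMap.id fun v => affineSimplex v stdSimplex.barycenter

/-- Barycentric subdivision of affine simplices. -/
def barycentricSubdivision {n : ℕ} :
    Chains R (tuples (Simplex n)) →ₗ[R] Chains R (tuples (Simplex n)) :=
  coneDefect LinearMap.id fun v => affineSimplex v stdSimplex.barycenter

theorem barycentricSubdivision_apply {n : ℕ} (a : Chains R (tuples (Simplex n))) :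
    barycentricSubdivision a =
      a - boundary (barycentricHomotopy a) - barycentricHomotopy (boundary a) := rfl

theorem map_barycentricHomotopy {m n : ℕ} (u : Fin m → Simplex n)
    (a : Chains R (tuples (Simplex m))) :
    (tuplesMap (affineSimplex u)).map (barycentricHomotopy a) =
      barycentricHomotopy ((tuplesMap (affineSimplex u)).map a) :=
  map_coneHomotopy (f' := LinearMap.id) _ _ (fun _ => rfl)
    (fun v => DFunLike.congr_fun (affineSimplex_comp u v) stdSimplex.barycenter) a

/-- The homotopy between the identity and barycentric subdivision of singular chains. -/
def subdivisionHomotopy : Chains R (singular X) →ₗ[R] Chains R (singular X) :=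
  Finsupp.linearCombination R fun s =>
    (realize s.2).map (barycentricHomotopy (simplex stdSimplex.vertex))

/-- Barycentric subdivision of singular chains. -/
def subdivision : Chains R (singular X) →ₗ[R] Chains R (singular X) :=
  LinearMap.id - boundary ∘ₗ subdivisionHomotopy - subdivisionHomotopy ∘ₗ boundary

theorem subdivisionHomotopy_simplex {n : ℕ} (s : C(Simplex n, X)) :
    subdivisionHomotopy (simplex s : Chains R (singular X)) =
      (realize s).map (barycentricHomotopy (simplex stdSimplex.vertex)) := by
  simp [subdivisionHomotopy, simplex]

theorem tuplesMap_affineSimplex_vertices {k n : ℕ} (v : Fin k → Simplex n) :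
    (tuplesMap (affineSimplex v)).map (simplex stdSimplex.vertex : Chains R (tuples (Simplex k))) =
      simplex v := by
  rw [Hom.map_simplex]
  exact congrArg simplex (funext fun i => affineSimplex_vertex v i)

theorem subdivisionHomotopy_realize {n : ℕ} (s : C(Simplex n, X))
    (a : Chains R (tuples (Simplex n))) :
    subdivisionHomotopy ((realize s).map a) = (realize s).map (barycentricHomotopy a) := by
  suffices h : subdivisionHomotopy ∘ₗ (realize s).map =
      (realize s).map (R := R) ∘ₗ barycentricHomotopy from LinearMap.congr_fun h a
  refine chains_hom_ext fun k v => ?_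
  rw [LinearMap.comp_apply, LinearMap.comp_apply, Hom.map_simplex]
  change subdivisionHomotopy (simplex (s.comp (affineSimplex v))) = _
  rw [subdivisionHomotopy_simplex, realize_comp_affineSimplex, map_barycentricHomotopy,
    tuplesMap_affineSimplex_vertices]

theorem subdivision_realize {n : ℕ} (s : C(Simplex n, X)) (a : Chains R (tuples (Simplex n))) :
    subdivision ((realize s).map a) = (realize s).map (barycentricSubdivision a) := by
  simp only [barycentricSubdivision_apply, subdivision, LinearMap.sub_apply, LinearMap.comp_apply,
    LinearMap.id_apply, map_sub, Hom.boundary_map, subdivisionHomotopy_realize]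

theorem subdivision_pow_simplex {n : ℕ} (s : C(Simplex n, X)) (m : ℕ) :
    (subdivision ^ m) (simplex s : Chains R (singular X)) =
      (realize s).map ((barycentricSubdivision ^ m) (simplex stdSimplex.vertex)) := by
  induction m with
  | zero => exact simplex_eq_realize s
  | succ m ih => rw [pow_succ', pow_succ', Module.End.mul_apply, ih, subdivision_realize,
      Module.End.mul_apply]

theorem map_subdivisionHomotopy (f : C(X, Y)) (c : Chains R (singular X)) :
    (singularMap f).map (subdivisionHomotopy c) =
      subdivisionHomotopy ((singularMap f).map c) := by
  suffices h : (singularMap f).map ∘ₗ subdivisionHomotopy =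
      subdivisionHomotopy (R := R) ∘ₗ (singularMap f).map from LinearMap.congr_fun h c
  refine chains_hom_ext fun k s => ?_
  rw [LinearMap.comp_apply, LinearMap.comp_apply, subdivisionHomotopy_simplex, singularMap_realize,
    Hom.map_simplex]
  exact (subdivisionHomotopy_simplex _).symm

theorem affineSimplex_mem_of_convex {k n : ℕ} {v : Fin k → Simplex n} {C : Set (Fin n → ℝ)}
    (hC : Convex ℝ C) (hv : ∀ i, (v i).1 ∈ C) (t : Simplex k) : (affineSimplex v t).1 ∈ C :=
  hC.sum_mem (fun i _ => stdSimplex.zero_le t i) (stdSimplex.sum_eq_one t) fun i _ => hv i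

theorem dist_barycenter_le {k n : ℕ} {v : Fin (k + 1) → Simplex n} {r : ℝ}
    (hv : ∀ i j, dist (v i) (v j) ≤ r) (t : Simplex (k + 1)) :
    dist (affineSimplex v t) (affineSimplex v stdSimplex.barycenter) ≤ k / (k + 1) * r := by
  set b : Fin n → ℝ := ∑ i, (k + 1 : ℝ)⁻¹ • (v i).1
  have hbarycenter : (affineSimplex v stdSimplex.barycenter).1 = b := by
    change ∑ i, (Fintype.card (Fin (k + 1)) : ℝ)⁻¹ • (v i).1 = b
    rw [Fintype.card_fin, Nat.cast_succ]
  have hvertex (l : Fin (k + 1)) : dist (v l).1 b ≤ k / (k + 1) * r := by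
    have hsub : b - (v l).1 = (k + 1 : ℝ)⁻¹ • ∑ i, ((v i).1 - (v l).1) := by
      rw [Finset.sum_sub_distrib, Finset.sum_const, Finset.card_univ, Fintype.card_fin, smul_sub,
        ← Nat.cast_smul_eq_nsmul ℝ, Nat.cast_succ, inv_smul_smul₀ (by positivity), Finset.smul_sum]
    rw [dist_comm, dist_eq_norm, hsub, norm_smul, Fin.sum_univ_succAbove _ l, sub_self, zero_add,
      norm_inv, Real.norm_of_nonneg (by positivity)]
    have hsum : ‖∑ i, ((v (l.succAbove i)).1 - (v l).1)‖ ≤ k * r :=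
      (norm_sum_le_of_le _ fun i _ => hv (l.succAbove i) l).trans_eq (by simp)
    calc ((k : ℝ) + 1)⁻¹ * _ ≤ (k + 1 : ℝ)⁻¹ * (k * r) := by gcongr
      _ = k / (k + 1) * r := by ring
  have hmem := affineSimplex_mem_of_convex (convex_closedBall b _) hvertex t
  rw [← hbarycenter] at hmem
  exact hmem

theorem map_barycentricSubdivision {m n : ℕ} (u : Fin m → Simplex n)
    (a : Chains R (tuples (Simplex m))) :
    (tuplesMap (affineSimplex u)).map (barycentricSubdivision a) =
      barycentricSubdivision ((tuplesMap (affineSimplex u)).map a) := by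
  simp only [barycentricSubdivision_apply, map_sub, ← Hom.boundary_map, map_barycentricHomotopy]

/-- The tuples of `k` points of a simplex that are at distance at most `r` from each other. -/
def smallTuples (n k : ℕ) (r : ℝ) : Set (Σ k, (tuples (Simplex n)).obj k) :=
  {s | s.1 = k ∧ ∀ i j, dist (s.2 i) (s.2 j) ≤ r}

/-- The tuples of points of the image of `f`. -/
def tuplesInRange (f : A → B) : Set (Σ k, (tuples B).obj k) :=
  {s | ∀ i, s.2 i ∈ Set.range f}

theorem map_mem_chainsOn_tuplesInRange (f : A → B) (c : Chains R (tuples A)) :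
    (tuplesMap f).map c ∈ chainsOn R (tuplesInRange f) := by
  refine map_mem_of_mem_chainsOn (S := Set.univ) _ (fun k v _ => ?_) (by simp)
  rw [Hom.map_simplex]
  exact simplex_mem_chainsOn fun i => ⟨v i, rfl⟩

theorem boundary_mem_smallTuples {n k : ℕ} {v : Fin (k + 1) → Simplex n} {r : ℝ}
    (hv : ∀ i j, dist (v i) (v j) ≤ r) :
    boundary (simplex v : Chains R (tuples (Simplex n))) ∈ chainsOn R (smallTuples n k r) := by
  rw [boundary_simplex_succ]
  exact Submodule.sum_mem _ fun i _ => Submodule.smul_mem _ _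
    (simplex_mem_chainsOn ⟨rfl, fun j l => hv (i.succAbove j) (i.succAbove l)⟩)

theorem cone_barycenter_mem_smallTuples {n k : ℕ} {v : Fin (k + 1) → Simplex n} {r ρ : ℝ}
    (hv : ∀ i j, dist (v i) (v j) ≤ r) (hρ : k / (k + 1) * r ≤ ρ)
    {c : Chains R (tuples (Simplex n))} (hc : c ∈ chainsOn R (smallTuples n k ρ))
    (hc' : c ∈ chainsOn R (tuplesInRange (affineSimplex v))) :
    cone (affineSimplex v stdSimplex.barycenter) c ∈ chainsOn R (smallTuples n (k + 1) ρ) := by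
  have hmem : c ∈ chainsOn R (smallTuples n k ρ ∩ tuplesInRange (affineSimplex v)) := by
    rw [chainsOn, Finsupp.supported_inter]
    exact ⟨hc, hc'⟩
  have hr : 0 ≤ r := dist_nonneg.trans (hv 0 0)
  have hρ₀ : 0 ≤ ρ := le_trans (by positivity) hρ
  refine map_mem_of_mem_chainsOn _ ?_ hmem
  rintro l w ⟨⟨hl, hw⟩, hw'⟩
  have hdist (i : Fin l) : dist (w i) (affineSimplex v stdSimplex.barycenter) ≤ ρ := by
    obtain ⟨t, ht : affineSimplex v t = w i⟩ := hw' i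
    exact ht ▸ (dist_barycenter_le hv t).trans hρ
  rw [cone_simplex]
  refine simplex_mem_chainsOn ⟨congrArg Nat.succ hl, fun i j => ?_⟩
  cases i using Fin.cases <;> cases j using Fin.cases
  · simpa using hρ₀
  · simpa [dist_comm] using hdist _
  · simpa using hdist _
  · exact hw _ _

theorem barycentricSubdivision_mem_smallTuples {n N : ℕ} {r : ℝ} :
    ∀ {k : ℕ}, k ≤ N + 1 → ∀ {c : Chains R (tuples (Simplex n))},
      c ∈ chainsOn R (smallTuples n k r) →
      barycentricSubdivision c ∈ chainsOn R (smallTuples n k (N / (N + 1) * r)) := by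
  intro k
  induction k with
  | zero =>
    refine fun _ {c} => map_mem_of_mem_chainsOn _ ?_
    rintro _ v ⟨rfl, -⟩
    rw [barycentricSubdivision, coneDefect_simplex_zero]
    exact simplex_mem_chainsOn ⟨rfl, fun i => i.elim0⟩
  | succ k ih =>
    refine fun hk {c} => map_mem_of_mem_chainsOn _ ?_
    rintro _ v ⟨rfl, hv⟩
    have hr : 0 ≤ r := dist_nonneg.trans (hv 0 0)
    have hkN : (k : ℝ) ≤ N := by exact_mod_cast Nat.le_of_succ_le_succ hk
    have hratio : (k : ℝ) / (k + 1) ≤ N / (N + 1) := by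
      rw [div_le_div_iff₀ (by positivity) (by positivity)]
      linarith
    rw [barycentricSubdivision, coneDefect_simplex_succ (f := LinearMap.id) fun _ => rfl]
    refine cone_barycenter_mem_smallTuples hv (mul_le_mul_of_nonneg_right hratio hr)
      (ih (by omega) (boundary_mem_smallTuples hv)) ?_
    change barycentricSubdivision (boundary (simplex v)) ∈ _
    rw [← tuplesMap_affineSimplex_vertices, Hom.boundary_map, ← map_barycentricSubdivision]
    exact map_mem_chainsOn_tuplesInRange _ _

theorem barycentricSubdivision_pow_mem_smallTuples (n m : ℕ) :
    (barycentricSubdivision ^ m) (simplex stdSimplex.vertex : Chains R (tuples (Simplex n))) ∈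
      chainsOn R (smallTuples n n ((n / (n + 1)) ^ m)) := by
  induction m with
  | zero =>
    refine simplex_mem_chainsOn ⟨rfl, fun i j => ?_⟩
    rw [pow_zero]
    exact (Metric.dist_le_diam_of_mem (bounded_stdSimplex (Fin n)) (stdSimplex.vertex i).2
      (stdSimplex.vertex j).2).trans diam_stdSimplex_le
  | succ m ih =>
    rw [pow_succ' barycentricSubdivision, Module.End.mul_apply, pow_succ' (n / (n + 1) : ℝ)]
    exact barycentricSubdivision_mem_smallTuples n.le_succ ih

/-- The singular simplices of `X` with `n` vertices and image in `U`. The index is an integer so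
that a degree can always be lowered by one. -/
def simplicesIn (n : ℤ) (U : Set X) : Set (Σ k, (singular X).obj k) :=
  {s | s.1 = n ∧ ∀ t, s.2 t ∈ U}

theorem realize_map_mem {n k : ℕ} {r : ℝ} {s : C(Simplex n, X)} {S : Set (Σ k, (singular X).obj k)}
    (hS : ∀ w : Fin k → Simplex n, (∀ i j, dist (w i) (w j) ≤ r) →
      ⟨k, s.comp (affineSimplex w)⟩ ∈ S)
    {a : Chains R (tuples (Simplex n))} (ha : a ∈ chainsOn R (smallTuples n k r)) :
    (realize s).map a ∈ chainsOn R S := by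
  refine map_mem_of_mem_chainsOn _ ?_ ha
  rintro _ w ⟨rfl, hw⟩
  rw [Hom.map_simplex]
  exact simplex_mem_chainsOn (hS w hw)

theorem comp_affineSimplex_mem_simplicesIn {n : ℕ} {s : C(Simplex n, X)} {U V : Set X}
    (hU : IsOpen U) (hV : IsOpen V) (hs : ∀ t, s t ∈ U ∪ V) :
    ∃ δ > 0, ∀ r < δ, ∀ {k : ℕ} (w : Fin k → Simplex n), (∀ i j, dist (w i) (w j) ≤ r) →
      ⟨k, s.comp (affineSimplex w)⟩ ∈ simplicesIn k U ∪ simplicesIn k V := by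
  obtain ⟨δ, hδ, hball⟩ := lebesgue_number_lemma_of_metric (isCompact_univ (X := Simplex n))
    (c := fun b : Bool => s ⁻¹' cond b U V)
    (fun b => (b.rec hV hU : IsOpen (cond b U V)).preimage s.continuous)
    (fun t _ => Set.mem_iUnion.2 ((hs t).elim (fun h => ⟨true, h⟩) fun h => ⟨false, h⟩))
  refine ⟨δ, hδ, fun r hr k w hw => ?_⟩
  cases k with
  | zero => exact Or.inl ⟨rfl, fun t => by simpa using stdSimplex.sum_eq_one t⟩
  | succ k =>
    obtain ⟨b, hb⟩ := hball (w 0) trivial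
    have hmem (t : Simplex (k + 1)) : s (affineSimplex w t) ∈ cond b U V := by
      have hclosed := affineSimplex_mem_of_convex (convex_closedBall (w 0).1 r)
        (fun i => hw i 0) t
      exact hb (lt_of_le_of_lt hclosed hr)
    cases b with
    | true => exact Or.inl ⟨rfl, hmem⟩
    | false => exact Or.inr ⟨rfl, hmem⟩

theorem eventually_subdivision_simplex_mem {n : ℕ} {s : C(Simplex n, X)} {U V : Set X}
    (hU : IsOpen U) (hV : IsOpen V) (hs : ∀ t, s t ∈ U ∪ V) :
    ∀ᶠ m in atTop, (subdivision ^ m) (simplex s : Chains R (singular X)) ∈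
      chainsOn R (simplicesIn n U ∪ simplicesIn n V) := by
  obtain ⟨δ, hδ, hsmall⟩ := comp_affineSimplex_mem_simplicesIn hU hV hs
  have hlim : Tendsto (fun m : ℕ => ((n : ℝ) / (n + 1)) ^ m) atTop (nhds 0) :=
    tendsto_pow_atTop_nhds_zero_of_lt_one (by positivity)
      ((div_lt_one (by positivity)).2 (lt_add_one _))
  filter_upwards [hlim.eventually (gt_mem_nhds hδ)] with m hm
  rw [subdivision_pow_simplex]
  exact realize_map_mem (hsmall _ hm) (barycentricSubdivision_pow_mem_smallTuples n m)

theorem eventually_subdivision_mem {n : ℤ} {U V : Set X} (hU : IsOpen U) (hV : IsOpen V)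
    {c : Chains R (singular X)} (hc : c ∈ chainsOn R (simplicesIn n (U ∪ V))) :
    ∀ᶠ m in atTop, (subdivision ^ m) c ∈ chainsOn R (simplicesIn n U ∪ simplicesIn n V) := by
  have hsupport : ∀ s ∈ c.support, ∀ᶠ m in atTop, (subdivision ^ m) (simplex s.2) ∈
      chainsOn R (simplicesIn n U ∪ simplicesIn n V) := by
    rintro ⟨k, s⟩ hs
    obtain ⟨rfl, hU'⟩ := (Finsupp.mem_supported R c).1 hc hs
    exact eventually_subdivision_simplex_mem hU hV hU'
  filter_upwards [(eventually_all_finset c.support).2 hsupport] with m hm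
  exact map_mem_of_mem_chainsOn _ (fun k s hs => hm ⟨k, s⟩ hs) (Finsupp.mem_supported_support R c)

end Subdivision

section MayerVietoris

open Filter

/-- A differential module `C` with a submodule `chain n U` for every integer `n` and every set `U`
of points of `Y`, to be thought of as the `n`-chains supported over `U`, together with an operator
`T` such that iterating the endomorphism `1 - dT - Td` makes chains small with respect to any pair
of open sets. -/
structure LocalComplex (R C Y : Type*) [CommRing R] [AddCommGroup C] [Module R C]
    [TopologicalSpace Y] where
  d : Module.End R C
  T : Module.End R C
  chain : ℤ → Set Y → Submodule R C
  d_d : ∀ z, d (d z) = 0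
  chain_mono : ∀ {n U V}, U ⊆ V → chain n U ≤ chain n V
  mem_chain_inter : ∀ {n U V z}, z ∈ chain n U → z ∈ chain n V → z ∈ chain n (U ∩ V)
  d_mem : ∀ {n U z}, z ∈ chain n U → d z ∈ chain (n - 1) U
  T_mem : ∀ {n U z}, z ∈ chain n U → T z ∈ chain (n + 1) U
  eventually_small : ∀ {n U V z}, IsOpen U → IsOpen V → z ∈ chain n (U ∪ V) →
    ∀ᶠ m in atTop, ((1 - d * T - T * d : Module.End R C) ^ m) z ∈ chain n U ⊔ chain n V
  exists_finset : ∀ {n z} {F : Set (Set Y)}, (∀ U ∈ F, IsOpen U) → z ∈ chain n (⋃₀ F) →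
    ∃ t : Finset (Set Y), ↑t ⊆ F ∧ z ∈ chain n (⋃₀ ↑t)

namespace LocalComplex

variable {R C D Y ι : Type*} [CommRing R] [AddCommGroup C] [Module R C] [AddCommGroup D]
  [Module R D] [TopologicalSpace Y] (K : LocalComplex R C Y) {n : ℤ} {U V : Set Y}

/-- Every `n`-cycle supported over `U` bounds a chain supported over `U`. -/
def Acyclic (n : ℤ) (U : Set Y) : Prop :=
  ∀ z ∈ K.chain n U, K.d z = 0 → ∃ w ∈ K.chain (n + 1) U, K.d w = z

variable {K}

theorem exists_d_eq_sub_pow {z : C} (hz : z ∈ K.chain n U) (hdz : K.d z = 0) (m : ℕ) :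
    ∃ w ∈ K.chain (n + 1) U,
      K.d w = z - ((1 - K.d * K.T - K.T * K.d : Module.End R C) ^ m) z := by
  set sd : Module.End R C := 1 - K.d * K.T - K.T * K.d with hsd
  have hsd_cycle {y : C} (hy : K.d y = 0) : sd y = y - K.d (K.T y) := by simp [hsd, hy]
  induction m generalizing z with
  | zero => exact ⟨0, zero_mem _, by simp⟩
  | succ m ih =>
    have hTz := K.d_mem (K.T_mem hz)
    rw [add_sub_cancel_right] at hTz
    obtain ⟨w, hw, hdw⟩ := ih (z := sd z) (by rw [hsd_cycle hdz]; exact sub_mem hz hTz)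
      (by rw [hsd_cycle hdz, map_sub, K.d_d, hdz, sub_zero])
    refine ⟨K.T z + w, add_mem (K.T_mem hz) hw, ?_⟩
    rw [map_add, hdw, pow_succ, Module.End.mul_apply, hsd_cycle hdz]
    abel

theorem Acyclic.union (hU : IsOpen U) (hV : IsOpen V) (hKU : K.Acyclic n U) (hKV : K.Acyclic n V)
    (hKUV : K.Acyclic (n - 1) (U ∩ V)) : K.Acyclic n (U ∪ V) := by
  intro z hz hdz
  obtain ⟨m, hm⟩ := (K.eventually_small hU hV hz).exists
  obtain ⟨w, hw, hdw⟩ := exists_d_eq_sub_pow hz hdz m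
  obtain ⟨a, ha, b, hb, hab⟩ := Submodule.mem_sup.1 hm
  have hdab : K.d a + K.d b = 0 := by
    rw [← map_add, hab,
      ← sub_sub_cancel z (((1 - K.d * K.T - K.T * K.d : Module.End R C) ^ m) z), ← hdw, map_sub,
      hdz, K.d_d, sub_zero]
  have hda : K.d a ∈ K.chain (n - 1) V := by
    rw [eq_neg_of_add_eq_zero_left hdab]
    exact neg_mem (K.d_mem hb)
  obtain ⟨e, he, hde⟩ := hKUV _ (K.mem_chain_inter (K.d_mem ha) hda) (K.d_d a)
  rw [sub_add_cancel] at he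
  obtain ⟨u, hu, hdu⟩ := hKU (a - e) (sub_mem ha (K.chain_mono Set.inter_subset_left he))
    (by rw [map_sub, hde, sub_self])
  obtain ⟨v, hv, hdv⟩ := hKV (b + e) (add_mem hb (K.chain_mono Set.inter_subset_right he))
    (by rw [map_add, hde, add_comm, hdab])
  refine ⟨w + u + v, add_mem (add_mem hw (K.chain_mono Set.subset_union_left hu))
    (K.chain_mono Set.subset_union_right hv), ?_⟩
  rw [map_add, map_add, hdw, hdu, hdv, ← hab]
  abel

theorem Acyclic.biUnion {s : Finset ι} (hs : s.Nonempty) {U : ι → Set Y}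
    (hU : ∀ i ∈ s, IsOpen (U i)) {n : ℤ}
    (hK : ∀ t ⊆ s, t.Nonempty → K.Acyclic (n + 1 - t.card) (⋂ i ∈ t, U i)) :
    K.Acyclic n (⋃ i ∈ s, U i) := by
  classical
  induction hs using Finset.Nonempty.cons_induction generalizing U n with
  | singleton a => simpa using hK {a} subset_rfl (Finset.singleton_nonempty a)
  | cons a s ha _ ih =>
    rw [Finset.cons_eq_insert, Finset.set_biUnion_insert]
    refine Acyclic.union (hU a (Finset.mem_cons_self a s))
      (isOpen_biUnion fun i hi => hU i (Finset.mem_cons_of_mem hi)) ?_ ?_ ?_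
    · simpa using hK {a} (by simp) (Finset.singleton_nonempty a)
    · exact ih (fun i hi => hU i (Finset.mem_cons_of_mem hi)) fun t ht =>
        hK t (ht.trans (Finset.subset_cons ha))
    · rw [Set.inter_iUnion₂]
      refine ih (fun i hi => (hU a (Finset.mem_cons_self a s)).inter
        (hU i (Finset.mem_cons_of_mem hi))) fun t ht ht₀ => ?_
      have hat := hK (Finset.cons a t fun h => ha (ht h)) (Finset.cons_subset_cons.2 ht)
        (Finset.cons_nonempty _)
      rw [Finset.card_cons, Finset.cons_eq_insert, Finset.set_biInter_insert] at hat
      convert hat using 1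
      · push_cast
        ring
      · exact Set.inter_biInter ht₀ _ _

theorem Acyclic.sUnion {F : Set (Set Y)} (hF : InfClosed F) (hopen : ∀ U ∈ F, IsOpen U)
    (hempty : ∀ n, K.Acyclic n ∅) (hK : ∀ n, ∀ U ∈ F, K.Acyclic n U) {G : Set (Set Y)}
    (hG : G ⊆ F) (n : ℤ) : K.Acyclic n (⋃₀ G) := by
  intro z hz hdz
  obtain ⟨t, htG, hzt⟩ := K.exists_finset (fun U hU => hopen U (hG hU)) hz
  suffices h : K.Acyclic n (⋃₀ ↑t) by
    obtain ⟨w, hw, hdw⟩ := h z hzt hdz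
    exact ⟨w, K.chain_mono (Set.sUnion_subset_sUnion htG) hw, hdw⟩
  obtain rfl | ht := t.eq_empty_or_nonempty
  · simpa using hempty n
  rw [Set.sUnion_eq_biUnion]
  refine Acyclic.biUnion (K := K) (U := id) ht (fun U hU => hopen U (hG (htG hU)))
    fun t' ht' ht₀ => ?_
  exact hK _ _ (hF.biInf_mem_of_nonempty (f := id) t'.finite_toSet ht₀ fun U hU =>
    hG (htG (ht' hU)))

/-- The mapping cone of a morphism `f` of local complexes, with differential
`(x, y) ↦ (dx, fx - dy)`. -/
def mappingCone (K : LocalComplex R C Y) (L : LocalComplex R D Y) (f : C →ₗ[R] D)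
    (hd : ∀ x, f (K.d x) = L.d (f x)) (hT : ∀ x, f (K.T x) = L.T (f x))
    (hf : ∀ {n U x}, x ∈ K.chain n U → f x ∈ L.chain n U) : LocalComplex R (C × D) Y where
  d := (K.d ∘ₗ LinearMap.fst R C D).prod (f.coprod (-L.d))
  T := K.T.prodMap (-L.T)
  chain n U := (K.chain (n - 1) U).prod (L.chain n U)
  d_d z := by simp [K.d_d, L.d_d, hd]
  chain_mono h := Submodule.prod_mono (K.chain_mono h) (L.chain_mono h)
  mem_chain_inter h h' := ⟨K.mem_chain_inter h.1 h'.1, L.mem_chain_inter h.2 h'.2⟩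
  d_mem h := ⟨K.d_mem h.1, add_mem (hf h.1) (neg_mem (L.d_mem h.2))⟩
  T_mem h := ⟨by simpa [add_sub_right_comm] using K.T_mem h.1, neg_mem (L.T_mem h.2)⟩
  eventually_small {n U V z} hU hV hz := by
    filter_upwards [K.eventually_small hU hV hz.1, L.eventually_small hU hV hz.2] with m hm hm'
    obtain ⟨a, ha, b, hb, hab⟩ := Submodule.mem_sup.1 hm
    obtain ⟨a', ha', b', hb', hab'⟩ := Submodule.mem_sup.1 hm'
    have hsd : (1 - (K.d ∘ₗ LinearMap.fst R C D).prod (f.coprod (-L.d)) * K.T.prodMap (-L.T) -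
        K.T.prodMap (-L.T) * (K.d ∘ₗ LinearMap.fst R C D).prod (f.coprod (-L.d)) :
          Module.End R (C × D)) = LinearMap.prodMapRingHom R C D
            (1 - K.d * K.T - K.T * K.d, 1 - L.d * L.T - L.T * L.d) := by
      ext z <;> simp [hT]
    rw [hsd, ← map_pow]
    exact Submodule.mem_sup.2 ⟨(a, a'), ⟨ha, ha'⟩, (b, b'), ⟨hb, hb'⟩, Prod.ext hab hab'⟩
  exists_finset {n z F} hF hz := by
    classical
    obtain ⟨t, ht, hzt⟩ := K.exists_finset hF hz.1
    obtain ⟨t', ht', hzt'⟩ := L.exists_finset hF hz.2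
    refine ⟨t ∪ t', ?_, K.chain_mono (Set.sUnion_subset_sUnion ?_) hzt,
      L.chain_mono (Set.sUnion_subset_sUnion ?_) hzt'⟩ <;> simp [ht, ht']

section Cone

variable {L : LocalComplex R D Y} {f : C →ₗ[R] D} {hd : ∀ x, f (K.d x) = L.d (f x)}
  {hT : ∀ x, f (K.T x) = L.T (f x)} {hf : ∀ {n U x}, x ∈ K.chain n U → f x ∈ L.chain n U}

theorem d_mappingCone (x : C) (y : D) :
    (mappingCone K L f hd hT hf).d (x, y) = (K.d x, f x - L.d y) := by
  simp [mappingCone, sub_eq_add_neg]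

theorem acyclic_mappingCone (hK : K.Acyclic (n - 1) U) (hL : L.Acyclic n U) :
    (mappingCone K L f hd hT hf).Acyclic n U := by
  rintro ⟨x, y⟩ ⟨hx, hy⟩ hxy
  rw [d_mappingCone, Prod.mk_eq_zero, sub_eq_zero] at hxy
  obtain ⟨x', hx', rfl⟩ := hK x hx hxy.1
  rw [sub_add_cancel] at hx'
  obtain ⟨y', hy', hdy'⟩ := hL (y - f x') (sub_mem hy (hf hx'))
    (by rw [map_sub, ← hxy.2, hd, sub_self])
  refine ⟨(x', -y'), ⟨by simpa using hx', neg_mem hy'⟩, ?_⟩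
  rw [d_mappingCone, map_neg, sub_neg_eq_add, hdy', add_sub_cancel]

theorem acyclic_mappingCone_of_bijOn (hf' : ∀ n, Set.BijOn f (K.chain n U) (L.chain n U)) (n : ℤ) :
    (mappingCone K L f hd hT hf).Acyclic n U := by
  rintro ⟨x, y⟩ ⟨hx, hy⟩ hxy
  rw [d_mappingCone, Prod.mk_eq_zero, sub_eq_zero] at hxy
  obtain ⟨x', hx', rfl⟩ := (hf' n).surjOn hy
  have hdx' : K.d x' = x := (hf' (n - 1)).injOn (K.d_mem hx') hx ((hd x').trans hxy.2.symm)
  refine ⟨(x', 0), ⟨by simpa using hx', zero_mem _⟩, ?_⟩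
  rw [d_mappingCone, map_zero, sub_zero, hdx']

theorem Acyclic.of_mappingCone (hcone : (mappingCone K L f hd hT hf).Acyclic (n + 1) U)
    (hL : L.Acyclic n U) : K.Acyclic n U := by
  intro x hx hdx
  obtain ⟨y, hy, hdy⟩ := hL (f x) (hf hx) (by rw [← hd, hdx, map_zero])
  obtain ⟨⟨x', y'⟩, ⟨hx', -⟩, hxy'⟩ := hcone (x, y) ⟨by simpa using hx, hy⟩
    (by rw [d_mappingCone, hdx, hdy, sub_self, Prod.mk_zero_zero])
  rw [d_mappingCone] at hxy'
  exact ⟨x', by simpa using hx', congrArg Prod.fst hxy'⟩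

end Cone

end LocalComplex

end MayerVietoris

section DeckChains

open FaceSystem Filter

variable {R : Type*} [CommRing R] {X : Type u} {Y : Type v} [TopologicalSpace X]
  [TopologicalSpace Y] {n : ℤ} {U V : Set X} {c : Chains R (singular X)}

theorem simplicesIn_mono (h : U ⊆ V) :
    (simplicesIn n U : Set (Σ k, (singular X).obj k)) ⊆ simplicesIn n V :=
  fun _ hs => ⟨hs.1, fun t => h (hs.2 t)⟩

theorem map_mem_simplicesIn {f : C(X, Y)} {W : Set Y} (hf : Set.MapsTo f U W)
    (hc : c ∈ chainsOn R (simplicesIn n U)) :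
    (singularMap f).map c ∈ chainsOn R (simplicesIn n W) := by
  refine map_mem_of_mem_chainsOn _ (fun k s hs => ?_) hc
  rw [Hom.map_simplex]
  exact simplex_mem_chainsOn ⟨hs.1, fun t => hf (hs.2 t)⟩

theorem boundary_mem_simplicesIn (hc : c ∈ chainsOn R (simplicesIn n U)) :
    boundary c ∈ chainsOn R (simplicesIn (n - 1) U) := by
  refine map_mem_of_mem_chainsOn _ ?_ hc
  rintro (_ | k) s ⟨rfl, hs⟩
  · rw [boundary_simplex_zero]
    exact zero_mem _
  · rw [boundary_simplex_succ]
    exact sum_mem fun i _ => Submodule.smul_mem _ _ (simplex_mem_chainsOn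
      ⟨by simp, fun t => hs (stdSimplex.map i.succAbove t)⟩)

theorem realize_mem_simplicesIn {m k : ℕ} {s : C(Simplex m, X)} (hs : ∀ t, s t ∈ U)
    {a : Chains R (tuples (Simplex m))} (ha : a ∈ chainsOn R (ofLength k)) :
    (realize s).map a ∈ chainsOn R (simplicesIn k U) := by
  refine map_mem_of_mem_chainsOn _ ?_ ha
  rintro _ w rfl
  rw [Hom.map_simplex]
  exact simplex_mem_chainsOn ⟨rfl, fun t => hs _⟩

theorem subdivisionHomotopy_mem_simplicesIn (hc : c ∈ chainsOn R (simplicesIn n U)) :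
    subdivisionHomotopy c ∈ chainsOn R (simplicesIn (n + 1) U) := by
  refine map_mem_of_mem_chainsOn _ ?_ hc
  rintro k s ⟨rfl, hs⟩
  rw [subdivisionHomotopy_simplex]
  exact realize_mem_simplicesIn hs (coneHomotopy_mem_ofLength (fun _ _ h => h) _
    (simplex_mem_chainsOn rfl))

theorem exists_finset_simplicesIn (p : C(X, Y)) {F : Set (Set Y)} (hF : ∀ U ∈ F, IsOpen U)
    (hc : c ∈ chainsOn R (simplicesIn n (p ⁻¹' ⋃₀ F))) :
    ∃ t : Finset (Set Y), ↑t ⊆ F ∧ c ∈ chainsOn R (simplicesIn n (p ⁻¹' ⋃₀ ↑t)) := by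
  have hcompact : IsCompact (⋃ s ∈ c.support, Set.range (p ∘ s.2)) :=
    c.support.isCompact_biUnion fun s _ => isCompact_range (p.continuous.comp s.2.continuous)
  have hcover : ⋃ s ∈ c.support, Set.range (p ∘ s.2) ⊆ ⋃₀ F :=
    Set.iUnion₂_subset fun s hs => Set.range_subset_iff.2 (hc hs).2
  obtain ⟨t, htF, ht, hsub⟩ := hcompact.elim_finite_subcover_image (c := id) hF
    (hcover.trans Set.sUnion_eq_biUnion.subset)
  refine ⟨ht.toFinset, by rwa [ht.coe_toFinset], fun s hs => ⟨(hc hs).1, fun x => ?_⟩⟩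
  rw [ht.coe_toFinset, Set.sUnion_eq_biUnion]
  exact hsub (Set.mem_iUnion₂.2 ⟨s, hs, x, rfl⟩)

/-- The chains fixed by the map `g`. -/
def fixedChains (R : Type*) [CommRing R] (g : C(X, X)) : Submodule R (Chains R (singular X)) :=
  LinearMap.eqLocus (singularMap g).map LinearMap.id

theorem mem_fixedChains {g : C(X, X)} : c ∈ fixedChains R g ↔ (singularMap g).map c = c := Iff.rfl

theorem boundary_mem_fixedChains {g : C(X, X)} (hc : c ∈ fixedChains R g) :
    boundary c ∈ fixedChains R g := by
  rw [mem_fixedChains, ← Hom.boundary_map, hc]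
  rfl

theorem subdivisionHomotopy_mem_fixedChains {g : C(X, X)} (hc : c ∈ fixedChains R g) :
    subdivisionHomotopy c ∈ fixedChains R g := by
  rw [mem_fixedChains, map_subdivisionHomotopy, hc]
  rfl

theorem subdivision_pow_mem_fixedChains {g : C(X, X)} (hc : c ∈ fixedChains R g) (m : ℕ) :
    (subdivision ^ m) c ∈ fixedChains R g := by
  have hmaps : Set.MapsTo subdivision (fixedChains R g : Set (Chains R (singular X)))
      (fixedChains R g) := fun z hz =>
    sub_mem (sub_mem hz (boundary_mem_fixedChains (subdivisionHomotopy_mem_fixedChains hz)))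
      (subdivisionHomotopy_mem_fixedChains (boundary_mem_fixedChains hz))
  rw [Module.End.pow_apply]
  exact hmaps.iterate m hc

theorem fixedChains_inf_chainsOn_union_le {g : C(X, X)} {S S' : Set (Σ k, (singular X).obj k)}
    (hS : ∀ k (s : C(Simplex k, X)), (⟨k, g.comp s⟩ : Σ k, (singular X).obj k) ∈ S ↔ ⟨k, s⟩ ∈ S) :
    fixedChains R g ⊓ chainsOn R (S ∪ S') ≤
      fixedChains R g ⊓ chainsOn R S ⊔ fixedChains R g ⊓ chainsOn R S' := by
  rintro c ⟨hgc, hc⟩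
  rw [← Set.union_sdiff_self, chainsOn, Finsupp.supported_union] at hc
  obtain ⟨a, ha, b, hb, rfl⟩ := Submodule.mem_sup.1 hc
  have hga : (singularMap g).map a ∈ chainsOn R S := map_mem_of_mem_chainsOn _ (fun k s hs => by
    rw [Hom.map_simplex]; exact simplex_mem_chainsOn ((hS k s).2 hs)) ha
  have hgb : (singularMap g).map b ∈ chainsOn R Sᶜ := map_mem_of_mem_chainsOn _ (fun k s hs => by
    rw [Hom.map_simplex]; exact simplex_mem_chainsOn fun h => hs.2 ((hS k s).1 h)) hb
  have hb' : b ∈ chainsOn R Sᶜ := Finsupp.supported_mono (fun s hs => hs.2) hb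
  have hdiff : (singularMap g).map a - a = b - (singularMap g).map b := by
    have hgab := mem_fixedChains.1 hgc
    rw [map_add] at hgab
    rw [sub_eq_sub_iff_add_eq_add, hgab, add_comm]
  have hzero : (singularMap g).map a - a = 0 :=
    Submodule.disjoint_def.1 (Finsupp.disjoint_supported_supported disjoint_compl_right) _
      (sub_mem hga ha) (hdiff ▸ sub_mem hb' hgb)
  refine Submodule.add_mem_sup ⟨sub_eq_zero.1 hzero, ha⟩
    ⟨(sub_eq_zero.1 (hdiff ▸ hzero)).symm, Finsupp.supported_mono Set.sdiff_subset hb⟩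

/-- The `g`-invariant singular chains of the total space of `p : X → Y`, localized over `Y`. -/
def invariantChains (R : Type*) [CommRing R] (p : C(X, Y)) (g : C(X, X)) (hg : p.comp g = p) :
    LocalComplex R (Chains R (singular X)) Y where
  d := boundary
  T := subdivisionHomotopy
  chain n U := fixedChains R g ⊓ chainsOn R (simplicesIn n (p ⁻¹' U))
  d_d := boundary_boundary_singular
  chain_mono h := inf_le_inf_left _
    (Finsupp.supported_mono (simplicesIn_mono (Set.preimage_mono h)))
  mem_chain_inter h h' := ⟨h.1, fun s hs => ⟨(h.2 hs).1, fun t => ⟨(h.2 hs).2 t, (h'.2 hs).2 t⟩⟩⟩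
  d_mem h := ⟨boundary_mem_fixedChains h.1, boundary_mem_simplicesIn h.2⟩
  T_mem h := ⟨subdivisionHomotopy_mem_fixedChains h.1,
    subdivisionHomotopy_mem_simplicesIn h.2⟩
  exists_finset hF h := by
    obtain ⟨t, ht, hc⟩ := exists_finset_simplicesIn p hF h.2
    exact ⟨t, ht, h.1, hc⟩
  eventually_small {n U V z} hU hV h := by
    have hpg (x : X) : p (g x) = p x := DFunLike.congr_fun hg x
    filter_upwards [eventually_subdivision_mem (hU.preimage p.continuous)
      (hV.preimage p.continuous) h.2] with m hm
    refine fixedChains_inf_chainsOn_union_le (fun k s => ?_)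
      ⟨subdivision_pow_mem_fixedChains h.1 m, hm⟩
    simp [simplicesIn, hpg]

end DeckChains

section Homotopy

open FaceSystem

variable {R : Type*} [CommRing R] {X : Type u} {Y : Type v} {W : Type w} [TopologicalSpace X]
  [TopologicalSpace Y] [TopologicalSpace W]

/-- The tuples of points of a product of simplices, viewed as singular simplices of the product and
pushed forward along `σ`. -/
def realizeProd {m n : ℕ} (σ : C(Simplex m × Simplex n, X)) :
    Hom (tuples (Simplex m × Simplex n)) (singular X) where
  app v := σ.comp ((affineSimplex (Prod.fst ∘ v)).prodMk (affineSimplex (Prod.snd ∘ v)))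
  app_face i v := by
    ext t
    exact congrArg σ (Prod.ext (affineSimplex_map (Prod.fst ∘ v) i.succAbove t).symm
      (affineSimplex_map (Prod.snd ∘ v) i.succAbove t).symm)

theorem realizeProd_map {l m n : ℕ} (σ : C(Simplex m × Simplex n, X)) (u : Fin l → Simplex m)
    (a : Chains R (tuples (Simplex l × Simplex n))) :
    (realizeProd (σ.comp ((affineSimplex u).prodMap (ContinuousMap.id _)))).map a =
      (realizeProd σ).map ((tuplesMap (Prod.map (affineSimplex u) id)).map a) := by
  rw [← Hom.map_comp]
  congr 2
  refine Hom.ext (funext fun k => funext fun v => ContinuousMap.ext fun t => ?_)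
  exact congrArg σ (Prod.ext (DFunLike.congr_fun (affineSimplex_comp u _) t) rfl)

/-- The difference of the two ends of the prism over an affine simplex. -/
def prismEnds {n : ℕ} :
    Chains R (tuples (Simplex n)) →ₗ[R] Chains R (tuples (Simplex n × Simplex 2)) :=
  (tuplesMap fun x => (x, stdSimplex.vertex 0)).map -
    (tuplesMap fun x => (x, stdSimplex.vertex 1)).map

/-- The decomposition of the prism over an affine simplex into simplices. -/
def affinePrism {n : ℕ} :
    Chains R (tuples (Simplex n)) →ₗ[R] Chains R (tuples (Simplex n × Simplex 2)) :=
  coneHomotopy prismEnds fun v => (v 0, stdSimplex.vertex 0)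

theorem boundary_affinePrism {n : ℕ} (a : Chains R (tuples (Simplex n))) :
    boundary (affinePrism a) + affinePrism (boundary a) = prismEnds a := by
  have hzero (v : Fin 0 → Simplex n) :
      prismEnds (simplex v : Chains R (tuples (Simplex n))) = 0 := by
    rw [prismEnds, LinearMap.sub_apply, Hom.map_simplex, Hom.map_simplex, sub_eq_zero]
    exact congrArg simplex (Subsingleton.elim (α := Fin 0 → Simplex n × Simplex 2) _ _)
  have hdefect := LinearMap.congr_fun (coneDefect_eq_zero (R := R)
    (fun c => by simp only [prismEnds, LinearMap.sub_apply, map_sub, Hom.boundary_map]) hzero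
      fun v => (v 0, stdSimplex.vertex 0)) a
  rw [coneDefect, LinearMap.sub_apply, LinearMap.sub_apply, sub_sub] at hdefect
  exact (sub_eq_zero.1 hdefect).symm

theorem map_affinePrism {m n : ℕ} (u : Fin m → Simplex n) (a : Chains R (tuples (Simplex m))) :
    (tuplesMap (Prod.map (affineSimplex u) id)).map (affinePrism a) =
      affinePrism ((tuplesMap (affineSimplex u)).map a) := by
  refine map_coneHomotopy _ _ (fun c => ?_) (fun v => rfl) a
  simp only [prismEnds, LinearMap.sub_apply, map_sub, ← Hom.map_comp]
  rfl

/-- The prism operator of a homotopy, the interval being the simplex with two vertices. -/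
def prism (H : C(X × Simplex 2, Y)) : Chains R (singular X) →ₗ[R] Chains R (singular Y) :=
  Finsupp.linearCombination R fun s =>
    (realizeProd (H.comp (s.2.prodMap (ContinuousMap.id _)))).map
      (affinePrism (simplex stdSimplex.vertex))

theorem prism_simplex (H : C(X × Simplex 2, Y)) {n : ℕ} (s : C(Simplex n, X)) :
    prism H (simplex s : Chains R (singular X)) =
      (realizeProd (H.comp (s.prodMap (ContinuousMap.id _)))).map
        (affinePrism (simplex stdSimplex.vertex)) := by
  simp [prism, simplex]

theorem prism_realize (H : C(X × Simplex 2, Y)) {n : ℕ} (s : C(Simplex n, X))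
    (a : Chains R (tuples (Simplex n))) :
    prism H ((realize s).map a) =
      (realizeProd (H.comp (s.prodMap (ContinuousMap.id _)))).map (affinePrism a) := by
  suffices h : prism H ∘ₗ (realize s).map =
      (realizeProd (H.comp (s.prodMap (ContinuousMap.id _)))).map (R := R) ∘ₗ affinePrism from
    LinearMap.congr_fun h a
  refine chains_hom_ext fun k v => ?_
  rw [LinearMap.comp_apply, LinearMap.comp_apply, Hom.map_simplex,
    ← tuplesMap_affineSimplex_vertices, ← map_affinePrism, ← realizeProd_map]
  exact prism_simplex H (s.comp (affineSimplex v))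

/-- The time `i` map of a homotopy. -/
def homotopyEnd (H : C(X × Simplex 2, Y)) (i : Fin 2) : C(X, Y) :=
  H.comp ((ContinuousMap.id X).prodMk (ContinuousMap.const X (stdSimplex.vertex i)))

theorem realizeProd_prismEnds (H : C(X × Simplex 2, Y)) {n : ℕ} (s : C(Simplex n, X))
    (i : Fin 2) :
    (realizeProd (H.comp (s.prodMap (ContinuousMap.id _)))).map
        ((tuplesMap fun x => (x, stdSimplex.vertex i)).map
          (simplex stdSimplex.vertex : Chains R (tuples (Simplex n)))) =
      (singularMap (homotopyEnd H i)).map (simplex s) := by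
  rw [Hom.map_simplex, Hom.map_simplex, Hom.map_simplex]
  refine congrArg simplex (ContinuousMap.ext fun t => congrArg H (Prod.ext ?_ ?_))
  · exact congrArg s (DFunLike.congr_fun (affineSimplex_vertices n) t)
  · refine stdSimplex.ext (funext fun j => ?_)
    change affineSimplex (fun _ => stdSimplex.vertex i) t j = stdSimplex.vertex i j
    rw [affineSimplex_apply, ← Finset.sum_mul, stdSimplex.sum_eq_one, one_mul]

theorem boundary_prism (H : C(X × Simplex 2, Y)) (c : Chains R (singular X)) :
    boundary (prism H c) + prism H (boundary c) =
      (singularMap (homotopyEnd H 0)).map c - (singularMap (homotopyEnd H 1)).map c := by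
  suffices h : boundary ∘ₗ prism H + prism H ∘ₗ boundary =
      (singularMap (homotopyEnd H 0)).map (R := R) - (singularMap (homotopyEnd H 1)).map from
    LinearMap.congr_fun h c
  refine chains_hom_ext fun k s => ?_
  simp only [LinearMap.add_apply, LinearMap.comp_apply, LinearMap.sub_apply,
    ← realizeProd_prismEnds]
  rw [simplex_eq_realize, Hom.boundary_map, prism_realize, prism_realize, Hom.boundary_map,
    ← map_add, boundary_affinePrism, prismEnds, LinearMap.sub_apply, map_sub]

theorem singularMap_prism {X' Y' : Type*} [TopologicalSpace X'] [TopologicalSpace Y']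
    {H : C(X × Simplex 2, Y)} {H' : C(X' × Simplex 2, Y')} {f : C(X, X')} {g : C(Y, Y')}
    (hH : ∀ x t, g (H (x, t)) = H' (f x, t)) (c : Chains R (singular X)) :
    (singularMap g).map (prism H c) = prism H' ((singularMap f).map c) := by
  suffices h : (singularMap g).map ∘ₗ prism H = prism H' ∘ₗ (singularMap f).map (R := R) from
    LinearMap.congr_fun h c
  refine chains_hom_ext fun k s => ?_
  rw [LinearMap.comp_apply, LinearMap.comp_apply, Hom.map_simplex, prism_simplex,
    ← Hom.map_comp]
  refine Eq.trans ?_ (prism_simplex H' (f.comp s)).symm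
  congr 2
  exact Hom.ext (funext fun k => funext fun v => ContinuousMap.ext fun t => hH _ _)

theorem prism_mem_simplicesIn_univ (H : C(X × Simplex 2, Y)) {n : ℤ} {c : Chains R (singular X)}
    (hc : c ∈ chainsOn R (simplicesIn n Set.univ)) :
    prism H c ∈ chainsOn R (simplicesIn (n + 1) Set.univ) := by
  refine map_mem_of_mem_chainsOn _ ?_ hc
  rintro k s ⟨rfl, -⟩
  rw [prism_simplex]
  refine map_mem_of_mem_chainsOn _ ?_ (coneHomotopy_mem_ofLength (k := k) ?_ _
    (simplex_mem_chainsOn rfl))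
  · rintro _ w rfl
    rw [Hom.map_simplex]
    exact simplex_mem_chainsOn ⟨rfl, fun _ => trivial⟩
  · exact fun l a ha => sub_mem (map_mem_ofLength _ ha) (map_mem_ofLength _ ha)

/-- The unique map to the tuples of points of a one-point set. -/
def collapse (F : FaceSystem.{u}) : Hom F (tuples Unit) where
  app _ _ := ()
  app_face _ _ := rfl

/-- The constant singular simplices at `x`, which are indexed by their number of vertices and hence
by the tuples of points of a one-point set. -/
def constantAt (x : X) : Hom (tuples Unit) (singular X) where
  app _ := ContinuousMap.const _ x
  app_face _ _ := rfl

variable {g : C(X, X)} {N : ℕ}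

theorem singularMap_constantAt (x : X) (c : Chains R (tuples Unit)) :
    (singularMap g).map ((constantAt x).map c) = (constantAt (g x)).map c := by
  rw [← Hom.map_comp]
  rfl

theorem singularMap_pow_constantAt (j : ℕ) (x : X) (c : Chains R (tuples Unit)) :
    ((singularMap g).map ^ j) ((constantAt x).map c) = (constantAt (g^[j] x)).map c := by
  induction j with
  | zero => rfl
  | succ j ih =>
    rw [pow_succ', Module.End.mul_apply, ih, singularMap_constantAt, Function.iterate_succ_apply']

/-- The constant singular chains at the orbit of `x` under a map of order `N`. -/
def orbitSum (g : C(X, X)) (N : ℕ) (x : X) : Chains R (tuples Unit) →ₗ[R] Chains R (singular X) :=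
  ∑ j ∈ Finset.range N, (constantAt (g^[j] x)).map

theorem orbitSum_apply (x : X) (c : Chains R (tuples Unit)) :
    orbitSum g N x c = ∑ j ∈ Finset.range N, (constantAt (g^[j] x)).map c := by
  rw [orbitSum, LinearMap.sum_apply]

theorem orbitSum_map (hgN : g^[N] = id) (x : X) : orbitSum (R := R) g N (g x) = orbitSum g N x := by
  refine LinearMap.ext fun c => ?_
  have h := (Finset.sum_range_succ' (fun j => (constantAt (g^[j] x)).map c) N).symm.trans
    (Finset.sum_range_succ _ N)
  rw [hgN] at h
  rw [orbitSum_apply, orbitSum_apply]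
  exact add_right_cancel h

theorem orbitSum_iterate (hgN : g^[N] = id) (x : X) (i : ℕ) :
    orbitSum (R := R) g N (g^[i] x) = orbitSum g N x := by
  induction i with
  | zero => rfl
  | succ i ih => rw [Function.iterate_succ_apply', orbitSum_map hgN, ih]

theorem boundary_orbitSum (x : X) (c : Chains R (tuples Unit)) :
    boundary (orbitSum g N x c) = orbitSum g N x (boundary c) := by
  simp only [orbitSum_apply, map_sum, Hom.boundary_map]

theorem orbitSum_mem_fixedChains (hgN : g^[N] = id) (x : X) (c : Chains R (tuples Unit)) :
    orbitSum g N x c ∈ fixedChains R g := by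
  rw [mem_fixedChains]
  refine Eq.trans ?_ (LinearMap.congr_fun (orbitSum_map hgN x) c)
  simp only [orbitSum_apply, map_sum, singularMap_constantAt, ← Function.iterate_succ_apply,
    Function.iterate_succ_apply']

theorem orbitSum_cone_collapse_mem_simplicesIn (x : X) {n : ℤ} {c : Chains R (singular X)}
    (hc : c ∈ chainsOn R (simplicesIn n Set.univ)) :
    orbitSum g N x (cone () ((collapse _).map c)) ∈ chainsOn R (simplicesIn (n + 1) Set.univ) := by
  refine map_mem_of_mem_chainsOn (orbitSum g N x ∘ₗ cone () ∘ₗ (collapse _).map) ?_ hc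
  rintro k s ⟨rfl, -⟩
  rw [LinearMap.comp_apply, LinearMap.comp_apply, Hom.map_simplex, cone_simplex, orbitSum_apply]
  refine sum_mem fun j _ => ?_
  rw [Hom.map_simplex]
  exact simplex_mem_chainsOn ⟨rfl, fun _ => trivial⟩

theorem exists_eq_const_of_orbit [T1Space X] (hN : 0 < N) (hgN : g^[N] = id) {x₀ : X} {k : ℕ}
    {s : C(Simplex k, X)} (hs : ∀ t, ∃ i, s t = g^[i] x₀) :
    ∃ i, s = ContinuousMap.const _ (g^[i] x₀) := by
  obtain _ | ⟨⟨t₀⟩⟩ := isEmpty_or_nonempty (Simplex k)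
  · exact ⟨0, ContinuousMap.ext isEmptyElim⟩
  have hfinite : (Set.range fun i => g^[i] x₀).Finite := by
    refine ((Finset.range N).finite_toSet.image fun i => g^[i] x₀).subset ?_
    rintro _ ⟨i, rfl⟩
    refine ⟨i % N, by simpa using Nat.mod_lt i hN, ?_⟩
    exact (Function.IsPeriodicPt.iterate_mod_apply (congrFun hgN x₀) i)
  have : Finite (Set.range fun i => g^[i] x₀) := hfinite
  have : PreconnectedSpace (Simplex k) :=
    Subtype.preconnectedSpace (convex_stdSimplex ℝ (Fin k)).isPreconnected
  obtain ⟨i, hi⟩ := hs t₀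
  have hmaps : Set.MapsTo s Set.univ (Set.range fun i => g^[i] x₀) :=
    fun t _ => (hs t).imp fun _ h => h.symm
  exact ⟨i, ContinuousMap.ext fun t => (isPreconnected_univ.constant_of_mapsTo ⟨inferInstance⟩
    s.continuous.continuousOn hmaps trivial trivial).trans hi⟩

theorem nsmul_singularMap_eq_orbitSum [T1Space X] {r : C(X, X)} {x₀ : X} (hN : 0 < N)
    (hgN : g^[N] = id) (hrg : ∀ x, g (r x) = r (g x)) (hr : ∀ x, ∃ i, r x = g^[i] x₀)
    {z : Chains R (singular X)} (hz : z ∈ fixedChains R g) :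
    N • (singularMap r).map z = orbitSum g N x₀ ((collapse _).map z) := by
  have hsum : (∑ j ∈ Finset.range N, (singularMap g).map (R := R) ^ j) ∘ₗ (singularMap r).map =
      orbitSum g N x₀ ∘ₗ (collapse _).map := by
    refine chains_hom_ext fun k s => ?_
    obtain ⟨i, hi⟩ := exists_eq_const_of_orbit (s := r.comp s) hN hgN fun t => hr (s t)
    have hconst : (simplex (r.comp s) : Chains R (singular X)) =
        (constantAt (g^[i] x₀)).map ((collapse _).map (simplex s)) := by
      rw [Hom.map_simplex, Hom.map_simplex, hi]
      rfl
    rw [LinearMap.comp_apply, Hom.map_simplex]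
    change (∑ j ∈ Finset.range N, (singularMap g).map ^ j) (simplex (r.comp s)) = _
    rw [hconst, LinearMap.sum_apply, LinearMap.comp_apply, ← orbitSum_iterate hgN x₀ i,
      orbitSum_apply]
    exact Finset.sum_congr rfl fun j _ => singularMap_pow_constantAt _ _ _
  have hfixed : (singularMap g).map ((singularMap r).map z) = (singularMap r).map z := by
    rw [← singularMap_comp, ContinuousMap.ext (f := g.comp r) (g := r.comp g) hrg,
      singularMap_comp, hz]
    rfl
  rw [← LinearMap.comp_apply, ← hsum, LinearMap.comp_apply, LinearMap.sum_apply,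
    ← Finset.card_range N, ← Finset.sum_const, Finset.card_range]
  refine Finset.sum_congr rfl fun j _ => ?_
  rw [Module.End.pow_apply, Function.iterate_fixed hfixed]

theorem exists_boundary_eq_of_homotopy [T1Space X] {x₀ : X} [Invertible (N : R)] (hN : 0 < N)
    (hgN : g^[N] = id) {H : C(X × Simplex 2, X)} (hHg : ∀ x t, g (H (x, t)) = H (g x, t))
    (hH₀ : homotopyEnd H 0 = ContinuousMap.id X) (hH₁ : ∀ x, ∃ i, homotopyEnd H 1 x = g^[i] x₀)
    {n : ℤ} {z : Chains R (singular X)} (hz : z ∈ fixedChains R g)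
    (hzn : z ∈ chainsOn R (simplicesIn n Set.univ)) (hdz : boundary z = 0) :
    ∃ w ∈ fixedChains R g ⊓ chainsOn R (simplicesIn (n + 1) Set.univ), boundary w = z := by
  set w := orbitSum g N x₀ (cone () ((collapse _).map z)) with hw
  have hprism : boundary (prism H z) = z - (singularMap (homotopyEnd H 1)).map z := by
    have h := boundary_prism H z
    rwa [hdz, map_zero, add_zero, hH₀, singularMap_id] at h
  have hdw : boundary w = N • (singularMap (homotopyEnd H 1)).map z := by
    rw [hw, boundary_orbitSum, boundary_cone, Hom.boundary_map, hdz, map_zero, map_zero, sub_zero,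
      nsmul_singularMap_eq_orbitSum hN hgN (fun x => hHg x _) hH₁ hz]
  have hprism_fixed : prism H z ∈ fixedChains R g := by
    rw [mem_fixedChains, singularMap_prism hHg, hz]
    rfl
  refine ⟨prism H z + ⅟(N : R) • w, add_mem ⟨hprism_fixed, prism_mem_simplicesIn_univ H hzn⟩
    (Submodule.smul_mem _ _ ⟨orbitSum_mem_fixedChains hgN _ _,
      orbitSum_cone_collapse_mem_simplicesIn _ hzn⟩), ?_⟩
  rw [map_add, map_smul, hprism, hdw, ← Nat.cast_smul_eq_nsmul R, invOf_smul_smul, sub_add_cancel]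

section Preimage

variable {p : C(X, Y)} {U : Set Y}

/-- The inclusion of the part of the total space of `p` lying over `U`. -/
def preimageInclusion (p : C(X, Y)) (U : Set Y) : C(p ⁻¹' U, X) :=
  ⟨Subtype.val, continuous_subtype_val⟩

theorem exists_map_preimageInclusion_eq {n : ℤ} {c : Chains R (singular X)}
    (hc : c ∈ chainsOn R (simplicesIn n (p ⁻¹' U))) :
    ∃ c' ∈ chainsOn R (simplicesIn n Set.univ),
      (singularMap (preimageInclusion p U)).map c' = c := by
  suffices h : c ∈ (chainsOn R (simplicesIn n Set.univ)).map
    (singularMap (preimageInclusion p U)).map from h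
  refine map_mem_of_mem_chainsOn LinearMap.id ?_ hc
  rintro k s ⟨rfl, hs⟩
  refine ⟨simplex (⟨fun t => ⟨s t, hs t⟩, by fun_prop⟩ : C(Simplex k, p ⁻¹' U)),
    simplex_mem_chainsOn ⟨rfl, fun _ => trivial⟩, ?_⟩
  rw [Hom.map_simplex]
  rfl

theorem singularMap_injective {f : C(X, Y)} (hf : Function.Injective f) :
    Function.Injective ((singularMap f).map (R := R)) := by
  refine Finsupp.mapDomain_injective ?_
  rintro ⟨k, s⟩ ⟨k', s'⟩ h
  obtain ⟨rfl, h⟩ := Sigma.mk.inj_iff.1 h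
  exact congrArg _ ((ContinuousMap.cancel_left hf).1 (eq_of_heq h))

theorem acyclic_invariantChains [T1Space X] [Invertible (N : R)] (hN : 0 < N)
    (hg : p.comp g = p) {g' : C(p ⁻¹' U, p ⁻¹' U)} (hg' : ∀ x, (g' x : X) = g x)
    (hgN : g'^[N] = id) {x₀ : p ⁻¹' U} {H : C((p ⁻¹' U) × Simplex 2, p ⁻¹' U)}
    (hHg : ∀ x t, g' (H (x, t)) = H (g' x, t)) (hH₀ : homotopyEnd H 0 = ContinuousMap.id _)
    (hH₁ : ∀ x, ∃ i, homotopyEnd H 1 x = g'^[i] x₀) (n : ℤ) :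
    (invariantChains R p g hg).Acyclic n U := by
  set ι := preimageInclusion p U
  have hι : Function.Injective ((singularMap ι).map (R := R)) :=
    singularMap_injective Subtype.val_injective
  have hgι (c) : (singularMap g).map ((singularMap ι).map c) =
      (singularMap ι).map (R := R) ((singularMap g').map c) := by
    rw [← singularMap_comp, ← singularMap_comp,
      ContinuousMap.ext (f := g.comp ι) (g := ι.comp g') fun x => (hg' x).symm]
  rintro _ ⟨hz, hzn⟩ hdz
  obtain ⟨c, hc, rfl⟩ := exists_map_preimageInclusion_eq hzn
  have hgc : c ∈ fixedChains R g' := hι ((hgι c).symm.trans hz)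
  have hdc : boundary c = 0 := hι (by rw [← Hom.boundary_map, map_zero]; exact hdz)
  obtain ⟨w, ⟨hgw, hw⟩, rfl⟩ := exists_boundary_eq_of_homotopy hN hgN hHg hH₀ hH₁ hgc hc hdc
  refine ⟨(singularMap ι).map w, ⟨?_, map_mem_simplicesIn (fun x _ => x.2) hw⟩,
    Hom.boundary_map _ _⟩
  change (singularMap g).map ((singularMap ι).map w) = (singularMap ι).map w
  rw [hgι, hgw]
  rfl

end Preimage

theorem pow_singularMap_mem_simplicesIn_univ {n : ℤ} {z : Chains R (singular X)}
    (hz : z ∈ chainsOn R (simplicesIn n Set.univ)) (j : ℕ) :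
    ((singularMap g).map ^ j) z ∈ chainsOn R (simplicesIn n Set.univ) := by
  induction j with
  | zero => exact hz
  | succ j ih =>
    rw [pow_succ', Module.End.mul_apply]
    exact map_mem_simplicesIn (Set.mapsTo_univ _ _) ih

theorem boundary_pow_singularMap (z : Chains R (singular X)) (j : ℕ) :
    boundary (((singularMap g).map ^ j) z) = ((singularMap g).map ^ j) (boundary z) := by
  rw [Module.End.pow_apply, Module.End.pow_apply]
  exact Function.Semiconj.iterate_right (fun c => Hom.boundary_map (singularMap g) c) j z

theorem exists_boundary_eq_sub_pow {H : C(X × Simplex 2, X)}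
    (hH₀ : homotopyEnd H 0 = ContinuousMap.id X) (hH₁ : homotopyEnd H 1 = g) {n : ℤ}
    {z : Chains R (singular X)} (hz : z ∈ chainsOn R (simplicesIn n Set.univ))
    (hdz : boundary z = 0) (j : ℕ) :
    ∃ w ∈ chainsOn R (simplicesIn (n + 1) Set.univ),
      boundary w = z - ((singularMap g).map ^ j) z := by
  induction j with
  | zero => exact ⟨0, zero_mem _, by simp⟩
  | succ j ih =>
    obtain ⟨w, hw, hdw⟩ := ih
    have hprism : boundary (prism H z) = z - (singularMap g).map z := by
      have h := boundary_prism H z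
      rwa [hdz, map_zero, add_zero, hH₀, hH₁, singularMap_id] at h
    refine ⟨w + ((singularMap g).map ^ j) (prism H z), add_mem hw
      (pow_singularMap_mem_simplicesIn_univ (prism_mem_simplicesIn_univ H hz) j), ?_⟩
    rw [map_add, hdw, boundary_pow_singularMap, hprism, map_sub, pow_succ, Module.End.mul_apply,
      sub_add_sub_cancel]

theorem singularMap_pow_simplex {k : ℕ} (s : C(Simplex k, X)) (j : ℕ) :
    ((singularMap g).map ^ j) (simplex s : Chains R (singular X)) = simplex ((g.comp ·)^[j] s) := by
  induction j with
  | zero => rfl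
  | succ j ih =>
    rw [pow_succ', Module.End.mul_apply, ih, Hom.map_simplex, Function.iterate_succ_apply']
    rfl

theorem singularMap_pow_eq_one (hgN : g^[N] = id) : (singularMap g).map (R := R) ^ N = 1 := by
  refine chains_hom_ext fun k s => ?_
  rw [singularMap_pow_simplex, Module.End.one_apply]
  have h (j : ℕ) (t : Simplex k) : ((g.comp ·)^[j] s) t = g^[j] (s t) := by
    induction j with
    | zero => rfl
    | succ j ih =>
      rw [Function.iterate_succ_apply', Function.iterate_succ_apply', ContinuousMap.comp_apply, ih]
  exact congrArg simplex (ContinuousMap.ext fun t => (h N t).trans (congrFun hgN (s t)))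

theorem sum_pow_singularMap_mem_fixedChains (hgN : g^[N] = id) (z : Chains R (singular X)) :
    ∑ j ∈ Finset.range N, ((singularMap g).map ^ j) z ∈ fixedChains R g := by
  have h := (Finset.sum_range_succ' (fun j => ((singularMap g).map ^ j) z) N).symm.trans
    (Finset.sum_range_succ _ N)
  rw [singularMap_pow_eq_one hgN] at h
  rw [mem_fixedChains, map_sum]
  refine Eq.trans (Finset.sum_congr rfl fun j _ => ?_) (add_right_cancel h)
  rw [pow_succ', Module.End.mul_apply]

theorem exists_boundary_eq_of_acyclic_invariantChains [Invertible (N : R)] (hgN : g^[N] = id)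
    {H : C(X × Simplex 2, X)} (hH₀ : homotopyEnd H 0 = ContinuousMap.id X)
    (hH₁ : homotopyEnd H 1 = g) {p : C(X, Y)} (hg : p.comp g = p) {U : Set Y} (hU : ∀ x, p x ∈ U)
    {n : ℤ} (hK : (invariantChains R p g hg).Acyclic n U) {z : Chains R (singular X)}
    (hz : z ∈ chainsOn R (simplicesIn n Set.univ)) (hdz : boundary z = 0) :
    ∃ w ∈ chainsOn R (simplicesIn (n + 1) Set.univ), boundary w = z := by
  have hpU : p ⁻¹' U = Set.univ := Set.eq_univ_of_forall hU
  choose w hw hdw using exists_boundary_eq_sub_pow hH₀ hH₁ hz hdz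
  obtain ⟨v, ⟨-, hv⟩, hdv⟩ := hK (∑ j ∈ Finset.range N, ((singularMap g).map ^ j) z)
    ⟨sum_pow_singularMap_mem_fixedChains hgN z,
      sum_mem fun j _ => hpU ▸ pow_singularMap_mem_simplicesIn_univ hz j⟩
    (by
      change boundary _ = 0
      rw [map_sum]
      exact Finset.sum_eq_zero fun j _ => by rw [boundary_pow_singularMap, hdz, map_zero])
  refine ⟨⅟(N : R) • (v + ∑ j ∈ Finset.range N, w j), Submodule.smul_mem _ _
    (add_mem (hpU ▸ hv) (sum_mem fun j _ => hw j)), ?_⟩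
  change boundary v = _ at hdv
  rw [map_smul, map_add, map_sum, hdv, ← Finset.sum_add_distrib, invOf_smul_eq_iff]
  simp [hdw, Nat.cast_smul_eq_nsmul]

end Homotopy

section Projection

open FaceSystem LocalComplex

variable {R : Type*} [CommRing R] {X : Type u} {Y : Type v} [TopologicalSpace X]
  [TopologicalSpace Y]

theorem acyclic_invariantChains_of_neg {p : C(X, Y)} {g : C(X, X)} (hg : p.comp g = p) {n : ℤ}
    (hn : n < 0) (U : Set Y) : (invariantChains R p g hg).Acyclic n U := by
  rintro z ⟨-, hz⟩ -
  have hzero : z = 0 := Finsupp.support_eq_empty.1 (Finset.eq_empty_of_forall_notMem fun s hs => by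
    have hlen : (s.1 : ℤ) = n := (hz hs).1
    omega)
  exact ⟨0, zero_mem _, by rw [hzero, map_zero]⟩

/-- The singular chains of `Y`, localized over `Y` itself. -/
abbrev localChains (R : Type*) [CommRing R] (Y : Type v) [TopologicalSpace Y] :
    LocalComplex R (Chains R (singular Y)) Y :=
  invariantChains R (ContinuousMap.id Y) (ContinuousMap.id Y) rfl

theorem singularMap_mem_localChains {p : C(X, Y)} {g : C(X, X)} {hg : p.comp g = p} {n : ℤ}
    {U : Set Y} {c : Chains R (singular X)} (hc : c ∈ (invariantChains R p g hg).chain n U) :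
    (singularMap p).map c ∈ (localChains R Y).chain n U :=
  ⟨singularMap_id _, map_mem_simplicesIn (fun _ hx => hx) hc.2⟩

/-- The mapping cone comparing the `g`-invariant chains of the total space of `p` with the chains
of the base. -/
def projectionCone (R : Type*) [CommRing R] (p : C(X, Y)) (g : C(X, X)) (hg : p.comp g = p) :
    LocalComplex R (Chains R (singular X) × Chains R (singular Y)) Y :=
  mappingCone (invariantChains R p g hg) (localChains R Y) (singularMap p).map
    (fun c => (Hom.boundary_map _ c).symm) (fun c => map_subdivisionHomotopy p c)
    singularMap_mem_localChains

theorem eq_zero_of_mem_simplicesIn_empty {n : ℤ} {k : ℕ} {s : C(Simplex k, X)}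
    (hs : ⟨k, s⟩ ∈ simplicesIn n (∅ : Set X)) : k = 0 := by
  cases k with
  | zero => rfl
  | succ k => exact (hs.2 (stdSimplex.vertex 0)).elim

theorem bijOn_singularMap_chain_empty (p : C(X, Y)) (g : C(X, X)) (hg : p.comp g = p) (n : ℤ) :
    Set.BijOn (singularMap p).map
      ((invariantChains R p g hg).chain n ∅ : Set (Chains R (singular X)))
      ((localChains R Y).chain n ∅ : Set (Chains R (singular Y))) := by
  refine ⟨fun c hc => singularMap_mem_localChains hc, ?_, fun c hc => ?_⟩
  · refine (Finsupp.mapDomain_injOn (simplicesIn n (p ⁻¹' ∅)) ?_).mono fun c hc => hc.2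
    rintro ⟨k, s⟩ hs ⟨k', s'⟩ hs' -
    obtain rfl := eq_zero_of_mem_simplicesIn_empty hs
    obtain rfl := eq_zero_of_mem_simplicesIn_empty hs'
    exact congrArg _ (ContinuousMap.ext isEmptyElim)
  · suffices h : c ∈ ((invariantChains R p g hg).chain n ∅).map (singularMap p).map from h
    refine map_mem_of_mem_chainsOn LinearMap.id (fun k s hs => ?_) hc.2
    obtain rfl := eq_zero_of_mem_simplicesIn_empty hs
    refine ⟨simplex (⟨isEmptyElim, continuous_of_const isEmptyElim⟩ : C(Simplex 0, X)),
      ⟨?_, simplex_mem_chainsOn ⟨hs.1, isEmptyElim⟩⟩, ?_⟩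
    · exact (Hom.map_simplex _ _).trans (congrArg simplex (ContinuousMap.ext isEmptyElim))
    · exact (Hom.map_simplex _ _).trans (congrArg simplex (ContinuousMap.ext isEmptyElim))

theorem acyclic_projectionCone_empty (p : C(X, Y)) (g : C(X, X)) (hg : p.comp g = p) (n : ℤ) :
    (projectionCone R p g hg).Acyclic n ∅ :=
  acyclic_mappingCone_of_bijOn (bijOn_singularMap_chain_empty p g hg) n

end Projection

section HalfSpace

variable {E : Type*} [AddCommGroup E] [Module ℝ E] {ι : Type*} [Fintype ι]

/-- The open half-spaces on which a coordinate, respectively minus the sum of all the coordinates,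
is positive. -/
def halfSpace (b : Module.Basis ι ℝ E) : Option ι → Set E
  | some i => {x | 0 < b.coord i x}
  | none => {x | (∑ i, b.coord i) x < 0}

theorem convex_halfSpace (b : Module.Basis ι ℝ E) (i : Option ι) : Convex ℝ (halfSpace b i) := by
  cases i with
  | some i => exact convex_halfSpace_gt (b.coord i).isLinear 0
  | none => exact convex_halfSpace_lt (∑ i, b.coord i).isLinear 0

theorem iUnion_halfSpace (b : Module.Basis ι ℝ E) : ⋃ i, halfSpace b i = {0}ᶜ := by
  refine Set.eq_of_subset_of_subset (Set.iUnion_subset fun i => ?_) fun x hx => ?_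
  · rintro x hx rfl
    cases i <;> simp [halfSpace] at hx
  · by_contra h
    simp only [Set.mem_iUnion, Option.exists, not_or, not_exists] at h
    have hnonpos (i : ι) : b.coord i x ≤ 0 := not_lt.1 (h.2 i)
    have hsum : ∑ i, b.coord i x = 0 := le_antisymm (Finset.sum_nonpos fun i _ => hnonpos i)
      (by simpa [halfSpace] using h.1)
    exact hx (b.forall_coord_eq_zero_iff.1 fun i =>
      (Finset.sum_eq_zero_iff_of_nonpos fun i _ => hnonpos i).1 hsum i (Finset.mem_univ i))

theorem nonempty_iInter_halfSpace (b : Module.Basis ι ℝ E) (m : Option ι) :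
    (⋂ i ≠ m, halfSpace b i).Nonempty := by
  classical
  cases m with
  | none =>
    refine ⟨∑ i, b i, Set.mem_iInter₂.2 fun i hi => ?_⟩
    obtain ⟨i, rfl⟩ := Option.ne_none_iff_exists'.1 hi
    simp [halfSpace, Finsupp.single_apply]
  | some m =>
    refine ⟨∑ i, b i - (Fintype.card ι + 1 : ℝ) • b m, Set.mem_iInter₂.2 fun i hi => ?_⟩
    cases i with
    | some i =>
      have him : m ≠ i := fun h => hi (congrArg some h.symm)
      simp [halfSpace, Finsupp.single_apply, him]
    | none =>
      simp [halfSpace, Finsupp.single_apply, Finset.sum_add_distrib]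

end HalfSpace

section Convex

open LocalComplex

variable {E : Type*} [AddCommGroup E] [Module ℝ E] [TopologicalSpace E] [IsTopologicalAddGroup E]
  [ContinuousSMul ℝ E] {U : Set E}

/-- The contraction of a convex set to its point `p` along straight lines. -/
def straightLineHomotopy (hU : Convex ℝ U) (p : U) : C(U × Simplex 2, U) where
  toFun a := ⟨a.2 0 • (a.1 : E) + a.2 1 • (p : E), hU a.1.2 p.2 (stdSimplex.zero_le _ _)
    (stdSimplex.zero_le _ _) (by rw [← Fin.sum_univ_two, stdSimplex.sum_eq_one])⟩
  continuous_toFun := by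
    have hcoord (i : Fin 2) : Continuous fun a : U × Simplex 2 => a.2 i :=
      (continuous_apply i).comp (continuous_subtype_val.comp continuous_snd)
    exact (((hcoord 0).smul (continuous_subtype_val.comp continuous_fst)).add
      ((hcoord 1).smul continuous_const)).subtype_mk _

theorem coe_straightLineHomotopy (hU : Convex ℝ U) (p x : U) (t : Simplex 2) :
    (straightLineHomotopy hU p (x, t) : E) = t 0 • (x : E) + t 1 • (p : E) := rfl

theorem straightLineHomotopy_zero (hU : Convex ℝ U) (p x : U) :
    straightLineHomotopy hU p (x, stdSimplex.vertex 0) = x :=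
  Subtype.ext (by simp [coe_straightLineHomotopy])

theorem straightLineHomotopy_one (hU : Convex ℝ U) (p x : U) :
    straightLineHomotopy hU p (x, stdSimplex.vertex 1) = p :=
  Subtype.ext (by simp [coe_straightLineHomotopy])

theorem acyclic_localChains_of_convex (R : Type*) [CommRing R] [T1Space E] (hU : Convex ℝ U)
    (hne : U.Nonempty) (n : ℤ) : (localChains R E).Acyclic n U := by
  obtain ⟨p, hp⟩ := hne
  have : Invertible ((1 : ℕ) : R) := by rw [Nat.cast_one]; exact invertibleOne
  exact acyclic_invariantChains (p := ContinuousMap.id E) (U := U) (N := 1)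
    (g' := ContinuousMap.id U) one_pos rfl (fun _ => rfl) rfl (x₀ := ⟨p, hp⟩)
    (H := straightLineHomotopy hU ⟨p, hp⟩) (fun _ _ => rfl)
    (ContinuousMap.ext (straightLineHomotopy_zero hU _))
    (fun x => ⟨0, straightLineHomotopy_one hU _ x⟩) n

theorem isOpen_halfSpace {ι : Type*} [Fintype ι] [T2Space E] (b : Module.Basis ι ℝ E)
    (i : Option ι) : IsOpen (halfSpace b i) := by
  have : FiniteDimensional ℝ E := b.finiteDimensional_of_finite
  cases i with
  | some i => exact isOpen_lt continuous_const (b.coord i).continuous_of_finiteDimensional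
  | none => exact isOpen_lt (LinearMap.continuous_of_finiteDimensional _) continuous_const

theorem acyclic_localChains_compl_zero (R : Type*) [CommRing R] [T2Space E]
    [FiniteDimensional ℝ E] {n : ℤ} (hn : n < Module.finrank ℝ E) :
    (localChains R E).Acyclic n {0}ᶜ := by
  let b := Module.finBasis ℝ E
  rw [← iUnion_halfSpace b, ← Set.biUnion_univ, ← Finset.coe_univ]
  refine Acyclic.biUnion Finset.univ_nonempty (fun i _ => isOpen_halfSpace b i) fun t _ _ => ?_
  obtain rfl | ht := eq_or_ne t Finset.univ
  · refine acyclic_invariantChains_of_neg rfl ?_ _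
    rw [Finset.card_univ, Fintype.card_option, Fintype.card_fin]
    push_cast
    linarith
  · obtain ⟨m, hm⟩ := not_forall.1 (mt Finset.eq_univ_iff_forall.2 ht)
    refine acyclic_localChains_of_convex R (convex_iInter₂ fun i _ => convex_halfSpace b i)
      ((nonempty_iInter_halfSpace b m).mono ?_) _
    exact Set.biInter_subset_biInter_left fun i hi => ne_of_mem_of_not_mem hi hm

end Convex

section RootAlongSegment

variable {E : Type*} [AddCommGroup E] [Module ℝ E] {U : Set E}

theorem div_mem_slitPlane_of_convex {ℓ : E →ₗ[ℝ] ℂ} (hU : Convex ℝ U) (hℓ : ∀ x ∈ U, ℓ x ≠ 0)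
    {x y : E} (hx : x ∈ U) (hy : y ∈ U) : ℓ y / ℓ x ∈ Complex.slitPlane := by
  by_contra h
  obtain ⟨hre, him⟩ := not_or.1 h
  set s : ℝ := -(ℓ y / ℓ x).re with hs
  have hs₀ : 0 ≤ s := neg_nonneg.2 (not_lt.1 hre)
  have hratio : ℓ y / ℓ x = -(s : ℂ) :=
    Complex.ext (by simp [hs]) (by simpa using not_not.1 him)
  have hxy : ℓ y = -(s : ℂ) * ℓ x := (div_eq_iff (hℓ x hx)).1 hratio
  have hconv : (1 + s)⁻¹ • y + (s * (1 + s)⁻¹) • x ∈ U :=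
    hU hy hx (by positivity) (by positivity) (by field_simp)
  refine hℓ _ hconv ?_
  rw [map_add, map_smul, map_smul, hxy, Complex.real_smul, Complex.real_smul]
  push_cast
  ring

variable [TopologicalSpace E] [IsTopologicalAddGroup E] [ContinuousSMul ℝ E]

theorem exists_pow_mul_eq_straightLineHomotopy (ℓ : E →L[ℝ] ℂ) {N : ℕ} (hN : N ≠ 0)
    (hU : Convex ℝ U) {p : U} (hp : ℓ p = 0 ∨ ∀ x ∈ U, ℓ x ≠ 0) :
    ∃ m : C(U × Simplex 2, ℂ), (∀ x, m (x, stdSimplex.vertex 0) = 1) ∧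
      ∀ a, m a ^ N * ℓ a.1 = ℓ (straightLineHomotopy hU p a) := by
  obtain hp | hℓ := hp
  · have hcont : Continuous fun a : U × Simplex 2 => (((a.2 0 : ℝ) ^ (N⁻¹ : ℝ) : ℝ) : ℂ) := by
      refine Complex.continuous_ofReal.comp (Continuous.rpow_const
        ((continuous_apply 0).comp (continuous_subtype_val.comp continuous_snd)) fun _ => ?_)
      exact Or.inr (by positivity)
    refine ⟨⟨_, hcont⟩, fun x => by simp, fun a => ?_⟩
    rw [coe_straightLineHomotopy, map_add, map_smul, map_smul, hp, smul_zero, add_zero,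
      Complex.real_smul, ContinuousMap.coe_mk, ← Complex.ofReal_pow,
      Real.rpow_inv_natCast_pow (stdSimplex.zero_le _ _) hN]
  · have hcont : Continuous fun a : U × Simplex 2 =>
        (ℓ (straightLineHomotopy hU p a) / ℓ a.1) ^ (N⁻¹ : ℂ) :=
      .cpow ((ℓ.continuous.comp (continuous_subtype_val.comp (map_continuous _))).div
        (ℓ.continuous.comp (continuous_subtype_val.comp continuous_fst))
        fun a => hℓ _ a.1.2) continuous_const
        fun a => div_mem_slitPlane_of_convex hU hℓ a.1.2 (Subtype.prop _)
    refine ⟨⟨_, hcont⟩, fun x => ?_, fun a => ?_⟩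
    · simp [straightLineHomotopy_zero, hℓ _ x.2]
    · rw [ContinuousMap.coe_mk, Complex.cpow_nat_inv_pow _ hN, div_mul_cancel₀ _ (hℓ _ a.1.2)]

end RootAlongSegment

namespace ZPunct

open Complex

/-- The four linear forms on `ℂ³` whose product is the cube of the fourth coordinate on `Z`. -/
def linearForm : Fin 4 → (Fin 3 → ℂ) →L[ℂ] ℂ :=
  ![.proj 0, .proj 1, .proj 2, .proj 0 + .proj 1 + .proj 2]

/-- The projection `(x₁, x₂, x₃, x₄) ↦ (x₁, x₂, x₃)` of `Z ∖ {0}`. -/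
def proj : C(ZPunct, Fin 3 → ℂ) where
  toFun z i := z.1 i.castSucc
  continuous_toFun :=
    continuous_pi fun _ => (continuous_apply _).comp continuous_subtype_val

/-- The last coordinate on `Z ∖ {0}`, a cube root of the product of the four linear forms. -/
def root : C(ZPunct, ℂ) where
  toFun z := z.1 (Fin.last 3)
  continuous_toFun := (continuous_apply _).comp continuous_subtype_val

theorem ext {z w : ZPunct} (hproj : proj z = proj w) (hroot : root z = root w) : z = w :=
  Subtype.ext (funext (Fin.lastCases hroot (congrFun hproj)))

theorem root_pow (z : ZPunct) : root z ^ 3 = ∏ j, linearForm j (proj z) := by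
  rw [Fin.prod_univ_four]
  exact z.2.1

theorem proj_ne_zero (z : ZPunct) : proj z ≠ 0 := by
  intro h
  have hroot : root z = 0 := by
    rw [← pow_eq_zero_iff three_ne_zero, root_pow, h, Fin.prod_univ_four, map_zero, zero_mul,
      zero_mul, zero_mul]
  exact z.2.2 (funext (Fin.lastCases hroot (congrFun h)))

/-- The point of `Z ∖ {0}` over `x` whose last coordinate is `y`. -/
def ofRoot (x : Fin 3 → ℂ) (y : ℂ) (hx : x ≠ 0) (hy : y ^ 3 = ∏ j, linearForm j x) : ZPunct :=
  ⟨Fin.snoc (α := fun _ => ℂ) x y, by rwa [Fin.prod_univ_four] at hy,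
    fun h => hx (funext fun i => by simpa using congrFun h i.castSucc)⟩

theorem proj_ofRoot {x : Fin 3 → ℂ} {y : ℂ} (hx : x ≠ 0) (hy : y ^ 3 = ∏ j, linearForm j x) :
    proj (ofRoot x y hx hy) = x :=
  Fin.init_snoc (α := fun _ => ℂ) y x

theorem root_ofRoot {x : Fin 3 → ℂ} {y : ℂ} (hx : x ≠ 0) (hy : y ^ 3 = ∏ j, linearForm j x) :
    root (ofRoot x y hx hy) = y :=
  Fin.snoc_last (α := fun _ => ℂ) y x

theorem continuous_ofRoot {T : Type*} [TopologicalSpace T] {f : T → Fin 3 → ℂ} {r : T → ℂ}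
    (hf : Continuous f) (hr : Continuous r) (hf₀ : ∀ t, f t ≠ 0)
    (hpow : ∀ t, r t ^ 3 = ∏ j, linearForm j (f t)) :
    Continuous fun t => ofRoot (f t) (r t) (hf₀ t) (hpow t) :=
  (hf.finSnoc hr).subtype_mk _

theorem exists_proj_eq {x : Fin 3 → ℂ} (hx : x ≠ 0) : ∃ z, proj z = x := by
  obtain ⟨y, hy⟩ := IsAlgClosed.exists_pow_nat_eq (∏ j, linearForm j x) three_pos
  exact ⟨ofRoot x y hx hy, proj_ofRoot hx hy⟩

/-- The circle action `a • (x, y) = (a³x, a⁴y)`. -/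
def rotate : C(Circle × ZPunct, ZPunct) where
  toFun a := ofRoot ((a.1 : ℂ) ^ 3 • proj a.2) ((a.1 : ℂ) ^ 4 * root a.2)
    (smul_ne_zero (pow_ne_zero _ a.1.coe_ne_zero) (proj_ne_zero _)) (by
      simp_rw [map_smul, smul_eq_mul, Finset.prod_mul_distrib, ← root_pow]
      rw [Finset.prod_const, Finset.card_univ, Fintype.card_fin, mul_pow, ← pow_mul, ← pow_mul])
  continuous_toFun := by
    have hcoe : Continuous fun a : Circle × ZPunct => (a.1 : ℂ) :=
      continuous_subtype_val.comp continuous_fst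
    exact continuous_ofRoot
      ((hcoe.pow 3).smul (proj.continuous.comp continuous_snd))
      ((hcoe.pow 4).mul (root.continuous.comp continuous_snd)) _ _

theorem proj_rotate (a : Circle) (z : ZPunct) : proj (rotate (a, z)) = (a : ℂ) ^ 3 • proj z :=
  Fin.init_snoc (α := fun _ => ℂ) _ _

theorem root_rotate (a : Circle) (z : ZPunct) : root (rotate (a, z)) = (a : ℂ) ^ 4 * root z :=
  Fin.snoc_last (α := fun _ => ℂ) _ ((a : ℂ) ^ 3 • proj z)

/-- The primitive cube root of unity `exp (2πi/3)`. -/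
def omega : Circle := Circle.exp (2 * Real.pi / 3)

theorem isPrimitiveRoot_omega : IsPrimitiveRoot (omega : ℂ) 3 := by
  convert isPrimitiveRoot_exp 3 three_ne_zero using 1
  rw [omega, Circle.coe_exp]
  push_cast
  ring_nf

/-- The deck transformation multiplying the last coordinate by a primitive cube root of unity. -/
def deck : C(ZPunct, ZPunct) where
  toFun z := rotate (omega, z)
  continuous_toFun := rotate.continuous.comp (continuous_const.prodMk continuous_id)

theorem proj_deck (z : ZPunct) : proj (deck z) = proj z := by
  refine (proj_rotate omega z).trans ?_
  rw [isPrimitiveRoot_omega.pow_eq_one, one_smul]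

theorem proj_comp_deck : proj.comp deck = proj := ContinuousMap.ext proj_deck

theorem root_deck (z : ZPunct) : root (deck z) = omega * root z := by
  refine (root_rotate omega z).trans ?_
  rw [pow_succ, isPrimitiveRoot_omega.pow_eq_one, one_mul]

theorem proj_iterate_deck (i : ℕ) (z : ZPunct) : proj (deck^[i] z) = proj z := by
  induction i with
  | zero => rfl
  | succ i ih => rw [Function.iterate_succ_apply', proj_deck, ih]

theorem root_iterate_deck (i : ℕ) (z : ZPunct) : root (deck^[i] z) = (omega : ℂ) ^ i * root z := by
  induction i with
  | zero => simp
  | succ i ih => rw [Function.iterate_succ_apply', root_deck, ih, pow_succ', mul_assoc]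

theorem iterate_deck_three : deck^[3] = id :=
  funext fun z => ext (proj_iterate_deck 3 z) (by
    rw [root_iterate_deck, isPrimitiveRoot_omega.pow_eq_one, one_mul, id])

theorem exists_iterate_deck_eq {z w : ZPunct} (h : proj z = proj w) : ∃ i, z = deck^[i] w := by
  suffices hroot : ∃ i, root z = (omega : ℂ) ^ i * root w by
    obtain ⟨i, hi⟩ := hroot
    exact ⟨i, ext (h.trans (proj_iterate_deck i w).symm) (hi.trans (root_iterate_deck i w).symm)⟩
  have hpow : root z ^ 3 = root w ^ 3 := by rw [root_pow, root_pow, h]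
  obtain hw | hw := eq_or_ne (root w) 0
  · rw [hw, zero_pow three_ne_zero, pow_eq_zero_iff three_ne_zero] at hpow
    exact ⟨0, by rw [hpow, hw, mul_zero]⟩
  · obtain ⟨i, -, hi⟩ := isPrimitiveRoot_omega.eq_pow_of_pow_eq_one
      (ξ := root z / root w) (by rw [div_pow, hpow, div_self (pow_ne_zero 3 hw)])
    exact ⟨i, by rw [hi, div_mul_cancel₀ _ hw]⟩

/-- The homotopy from the identity to the deck transformation along the circle action. -/
def deckHomotopy : C(ZPunct × Simplex 2, ZPunct) :=
  rotate.comp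
    { toFun a := (Circle.exp (2 * Real.pi / 3 * a.2 1), a.1)
      continuous_toFun := by
        have hcoord : Continuous fun a : ZPunct × Simplex 2 => a.2 1 :=
          (continuous_apply 1).comp (continuous_subtype_val.comp continuous_snd)
        exact (Circle.exp.continuous.comp (continuous_const.mul hcoord)).prodMk continuous_fst }

theorem homotopyEnd_deckHomotopy_zero : homotopyEnd deckHomotopy 0 = .id ZPunct :=
  ContinuousMap.ext fun z => ext
    ((proj_rotate _ _).trans (by simp)) ((root_rotate _ _).trans (by simp))

theorem homotopyEnd_deckHomotopy_one : homotopyEnd deckHomotopy 1 = deck :=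
  have hexp : Circle.exp (2 * Real.pi / 3 * stdSimplex.vertex (S := ℝ) (1 : Fin 2) 1) = omega := by
    simp [omega]
  ContinuousMap.ext fun z => congrArg (fun a => rotate (a, z)) hexp

open LocalComplex

instance : T1Space ZPunct :=
  inferInstanceAs (T1Space (Subtype _))

section Contraction

variable {U : Set (Fin 3 → ℂ)}

/-- The restriction of the deck transformation to the part of `Z ∖ {0}` over `U`. -/
def deckOver (U : Set (Fin 3 → ℂ)) : C(proj ⁻¹' U, proj ⁻¹' U) where
  toFun := Set.MapsTo.restrict deck _ _ fun z hz => (proj_deck z).symm.subst (motive := (· ∈ U)) hz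
  continuous_toFun := deck.continuous.restrict _

theorem coe_iterate_deckOver (i : ℕ) (z : proj ⁻¹' U) :
    (((deckOver U)^[i] z : proj ⁻¹' U) : ZPunct) = deck^[i] z :=
  (Function.Semiconj.iterate_right (f := Subtype.val) (fun _ => rfl) i) z

theorem exists_lift_straightLineHomotopy (hU : Convex ℝ U) (hU₀ : 0 ∉ U) {q : U}
    (hq : ∀ j, linearForm j q = 0 ∨ ∀ x ∈ U, linearForm j x ≠ 0) :
    ∃ (H : C((proj ⁻¹' U) × Simplex 2, proj ⁻¹' U)) (m : U × Simplex 2 → ℂ),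
      (∀ x, m (x, stdSimplex.vertex 0) = 1) ∧
      ∀ z t, proj (H (z, t)) = straightLineHomotopy hU q (⟨proj z, z.2⟩, t) ∧
        root (H (z, t)) = m (⟨proj z, z.2⟩, t) * root z := by
  choose m hm₀ hm using fun j => exists_pow_mul_eq_straightLineHomotopy
    ((linearForm j).restrictScalars ℝ) three_ne_zero hU (hq j)
  let π : C((proj ⁻¹' U) × Simplex 2, U × Simplex 2) :=
    { toFun a := (⟨proj a.1, a.1.2⟩, a.2)
      continuous_toFun := by fun_prop }
  let s : C((proj ⁻¹' U) × Simplex 2, U) := (straightLineHomotopy hU q).comp π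
  have hs₀ (a) : (s a : Fin 3 → ℂ) ≠ 0 := fun h => hU₀ (h ▸ (s a).2)
  have hpow (a) : ((∏ j, m j (π a)) * root a.1) ^ 3 = ∏ j, linearForm j (s a) := by
    rw [mul_pow, root_pow, ← Finset.prod_pow, ← Finset.prod_mul_distrib]
    exact Finset.prod_congr rfl fun j _ => hm j (π a)
  refine ⟨⟨fun a => ⟨ofRoot (s a) _ (hs₀ a) (hpow a), ?_⟩, ?_⟩, fun a => ∏ j, m j a,
    fun x => Finset.prod_eq_one fun j _ => hm₀ j x,
    fun z t => ⟨proj_ofRoot (hs₀ (z, t)) (hpow (z, t)), root_ofRoot (hs₀ (z, t)) (hpow (z, t))⟩⟩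
  · rw [Set.mem_preimage, proj_ofRoot]
    exact (s a).2
  · exact (continuous_ofRoot (by fun_prop) (by fun_prop) hs₀ hpow).subtype_mk _

theorem acyclic_invariantChains_of_convex (R : Type*) [CommRing R] [Invertible ((3 : ℕ) : R)]
    (hU : Convex ℝ U) (hU₀ : 0 ∉ U) {q : U}
    (hq : ∀ j, linearForm j q = 0 ∨ ∀ x ∈ U, linearForm j x ≠ 0) (n : ℤ) :
    (invariantChains R proj deck proj_comp_deck).Acyclic n U := by
  obtain ⟨H, m, hm₀, hH⟩ := exists_lift_straightLineHomotopy hU hU₀ hq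
  obtain ⟨x₀, hx₀⟩ := exists_proj_eq (ne_of_mem_of_not_mem q.2 hU₀)
  have hx₀U : proj x₀ ∈ U := hx₀ ▸ q.2
  refine acyclic_invariantChains (N := 3) three_pos proj_comp_deck (g' := deckOver U)
    (fun _ => rfl) ?_ (x₀ := ⟨x₀, hx₀U⟩) (H := H) ?_ ?_ ?_ n
  · exact funext fun z => Subtype.ext
      ((coe_iterate_deckOver 3 z).trans (congrFun iterate_deck_three z))
  · intro z t
    have hbase : (⟨proj (deckOver U z), (deckOver U z).2⟩ : U) = ⟨proj z, z.2⟩ :=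
      Subtype.ext (proj_deck z)
    refine Subtype.ext (ext ((proj_deck _).trans ?_) ((root_deck _).trans ?_))
    · rw [(hH z t).1, (hH _ t).1, hbase]
    · rw [(hH z t).2, (hH _ t).2, hbase, mul_left_comm]
      exact congrArg _ (root_deck z).symm
  · refine ContinuousMap.ext fun z => Subtype.ext (ext ((hH z _).1.trans ?_) ((hH z _).2.trans ?_))
    · exact congrArg Subtype.val (straightLineHomotopy_zero hU q ⟨proj z, z.2⟩)
    · exact (congrArg (· * root z) (hm₀ ⟨proj z, z.2⟩)).trans (one_mul _)
  · intro z
    have hproj : proj (homotopyEnd H 1 z) = proj x₀ := by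
      rw [hx₀, ← straightLineHomotopy_one hU q ⟨proj z, z.2⟩]
      exact (hH z _).1
    obtain ⟨i, hi⟩ := exists_iterate_deck_eq hproj
    exact ⟨i, Subtype.ext (hi.trans (coe_iterate_deckOver i ⟨x₀, hx₀U⟩).symm)⟩

end Contraction

section Boxes

theorem eq_zero_of_linearForm_eq_zero (l : Fin 4) {x : Fin 3 → ℂ}
    (hx : ∀ j ≠ l, linearForm j x = 0) : x = 0 := by
  have hsum : linearForm 3 x = linearForm 0 x + linearForm 1 x + linearForm 2 x := rfl
  have hl : linearForm l x = 0 := by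
    fin_cases l <;> simp_all
  have hall (j : Fin 4) : linearForm j x = 0 :=
    (eq_or_ne j l).elim (fun h => h ▸ hl) (hx j)
  exact funext fun i => by fin_cases i <;> [exact hall 0; exact hall 1; exact hall 2]

/-- The linear coordinates on `ℂ³` given by the linear forms other than the `l`-th. -/
def formCoordinates (l : Fin 4) : (Fin 3 → ℂ) ≃L[ℂ] ({j // j ≠ l} → ℂ) :=
  (LinearEquiv.ofInjectiveOfFinrankEq
    (LinearMap.pi fun j : {j // j ≠ l} => (linearForm j).toLinearMap)
    (by
      refine (injective_iff_map_eq_zero _).2 fun x hx => ?_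
      exact eq_zero_of_linearForm_eq_zero l fun j hj => congrFun hx ⟨j, hj⟩)
    (by simp)).toContinuousLinearEquiv

theorem formCoordinates_apply (l : Fin 4) (x : Fin 3 → ℂ) (j : {j // j ≠ l}) :
    formCoordinates l x j = linearForm j x := rfl

/-- The open sets on which the `l`-th linear form does not vanish and which the other linear forms
identify with a product of convex sets. -/
def boxes (l : Fin 4) : Set (Set (Fin 3 → ℂ)) :=
  {U | IsOpen U ∧ (∀ x ∈ U, linearForm l x ≠ 0) ∧ ∃ D : {j // j ≠ l} → Set ℂ,
    (∀ j, Convex ℝ (D j)) ∧ U = formCoordinates l ⁻¹' Set.univ.pi D}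

theorem infClosed_boxes (l : Fin 4) : InfClosed (boxes l) := by
  rintro U ⟨hU, hUl, D, hD, rfl⟩ V ⟨hV, -, D', hD', rfl⟩
  refine ⟨hU.inter hV, fun x hx => hUl x hx.1, fun j => D j ∩ D' j,
    fun j => (hD j).inter (hD' j), ?_⟩
  rw [Set.pi_inter_distrib]
  rfl

theorem exists_sUnion_boxes_eq {l : Fin 4} {U : Set (Fin 3 → ℂ)} (hU : IsOpen U)
    (hUl : ∀ x ∈ U, linearForm l x ≠ 0) : ∃ G ⊆ boxes l, ⋃₀ G = U := by
  refine ⟨{V ∈ boxes l | V ⊆ U}, fun V hV => hV.1,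
    (Set.sUnion_subset fun V hV => hV.2).antisymm fun x hx => ?_⟩
  have hbasis : (nhds x).HasBasis (0 < ·) fun ε =>
      formCoordinates l ⁻¹' Metric.ball (formCoordinates l x) ε := by
    rw [(formCoordinates l).toHomeomorph.isInducing.nhds_eq_comap]
    exact Metric.nhds_basis_ball.comap _
  obtain ⟨ε, hε, hball⟩ := hbasis.mem_iff.1 (hU.mem_nhds hx)
  refine ⟨_, ⟨⟨Metric.isOpen_ball.preimage (formCoordinates l).continuous,
    fun y hy => hUl y (hball hy), fun j => Metric.ball (formCoordinates l x j) ε,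
    fun j => convex_ball _ _, by rw [ball_pi _ hε]⟩, hball⟩, Metric.mem_ball_self hε⟩

theorem convex_of_mem_boxes {l : Fin 4} {U : Set (Fin 3 → ℂ)} (hU : U ∈ boxes l) :
    Convex ℝ U := by
  obtain ⟨-, -, D, hD, rfl⟩ := hU
  exact (convex_pi fun j _ => hD j).linear_preimage
    ((formCoordinates l).toLinearEquiv.toLinearMap.restrictScalars ℝ)

theorem exists_mem_box_linearForm_eq_zero {l : Fin 4} {U : Set (Fin 3 → ℂ)} (hU : U ∈ boxes l)
    (hne : U.Nonempty) : ∃ q ∈ U, ∀ j, linearForm j q = 0 ∨ ∀ x ∈ U, linearForm j x ≠ 0 := by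
  classical
  obtain ⟨-, hUl, D, -, rfl⟩ := hU
  obtain ⟨u, hu⟩ := hne
  let c : {j // j ≠ l} → ℂ := fun j => if 0 ∈ D j then 0 else formCoordinates l u j
  have hc (j : {j // j ≠ l}) : c j ∈ D j := by
    by_cases hj : 0 ∈ D j
    · simp [c, hj]
    · simpa [c, hj] using hu j (Set.mem_univ j)
  refine ⟨(formCoordinates l).symm c, ?_, fun j => ?_⟩
  · rw [Set.mem_preimage, ContinuousLinearEquiv.apply_symm_apply]
    exact fun j _ => hc j
  · obtain rfl | hjl := eq_or_ne j l
    · exact Or.inr hUl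
    by_cases hj : 0 ∈ D ⟨j, hjl⟩
    · left
      rw [← formCoordinates_apply l _ ⟨j, hjl⟩, ContinuousLinearEquiv.apply_symm_apply]
      exact if_pos hj
    · exact Or.inr fun x hx h => hj (h ▸ hx ⟨j, hjl⟩ (Set.mem_univ _))

theorem acyclic_projectionCone_of_mem_boxes (R : Type*) [CommRing R] [Invertible ((3 : ℕ) : R)]
    {l : Fin 4} {U : Set (Fin 3 → ℂ)} (hU : U ∈ boxes l) (n : ℤ) :
    (projectionCone R proj deck proj_comp_deck).Acyclic n U := by
  obtain rfl | hne := U.eq_empty_or_nonempty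
  · exact acyclic_projectionCone_empty proj deck proj_comp_deck n
  obtain ⟨q, hqU, hq⟩ := exists_mem_box_linearForm_eq_zero hU hne
  have hU₀ : 0 ∉ U := fun h => hU.2.1 0 h (map_zero _)
  exact acyclic_mappingCone
    (acyclic_invariantChains_of_convex R (convex_of_mem_boxes hU) hU₀ (q := ⟨q, hqU⟩) hq _)
    (acyclic_localChains_of_convex R (convex_of_mem_boxes hU) hne _)

theorem acyclic_projectionCone (R : Type*) [CommRing R] [Invertible ((3 : ℕ) : R)] {l : Fin 4}
    {U : Set (Fin 3 → ℂ)} (hU : IsOpen U) (hUl : ∀ x ∈ U, linearForm l x ≠ 0) (n : ℤ) :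
    (projectionCone R proj deck proj_comp_deck).Acyclic n U := by
  obtain ⟨G, hG, rfl⟩ := exists_sUnion_boxes_eq hU hUl
  exact Acyclic.sUnion (infClosed_boxes l) (fun V hV => hV.1)
    (acyclic_projectionCone_empty proj deck proj_comp_deck)
    (fun n V hV => acyclic_projectionCone_of_mem_boxes R hV n) hG n

theorem iUnion_linearForm_ne_zero :
    ⋃ l ∈ (Finset.univ : Finset (Fin 4)), {x | linearForm l x ≠ 0} = {0}ᶜ := by
  ext x
  simp only [Finset.mem_univ, Set.iUnion_true, Set.mem_iUnion, Set.mem_ofPred_eq,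
    Set.mem_compl_singleton_iff]
  refine ⟨fun ⟨l, hl⟩ hx => hl (hx ▸ map_zero _), fun hx => ?_⟩
  by_contra! h
  exact hx (eq_zero_of_linearForm_eq_zero 0 fun j _ => h j)

theorem acyclic_projectionCone_compl_zero (R : Type*) [CommRing R] [Invertible ((3 : ℕ) : R)]
    (n : ℤ) : (projectionCone R proj deck proj_comp_deck).Acyclic n {0}ᶜ := by
  have hopen (l : Fin 4) : IsOpen {x | linearForm l x ≠ 0} :=
    isOpen_ne_fun (linearForm l).continuous continuous_const
  rw [← iUnion_linearForm_ne_zero]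
  refine Acyclic.biUnion Finset.univ_nonempty (fun l _ => hopen l) fun t _ ht => ?_
  obtain ⟨l, hl⟩ := ht
  exact acyclic_projectionCone R (isOpen_biInter_finset fun l _ => hopen l)
    (fun x hx => Set.mem_iInter₂.1 hx l hl) _

theorem exists_boundary_eq {R : Type*} [CommRing R] [Invertible ((3 : ℕ) : R)] {n : ℤ} (hn : n < 6)
    {z : FaceSystem.Chains R (singular ZPunct)}
    (hz : z ∈ FaceSystem.chainsOn R (simplicesIn n Set.univ)) (hdz : FaceSystem.boundary z = 0) :
    ∃ w ∈ FaceSystem.chainsOn R (simplicesIn (n + 1) Set.univ), FaceSystem.boundary w = z := by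
  have hfinrank : Module.finrank ℝ (Fin 3 → ℂ) = 6 := by
    rw [Module.finrank_pi_fintype, Finset.sum_const, Complex.finrank_real_complex]
    rfl
  have hbase : (localChains R (Fin 3 → ℂ)).Acyclic n {0}ᶜ :=
    acyclic_localChains_compl_zero R (by rw [hfinrank]; exact hn)
  have hinvariant : (invariantChains R proj deck proj_comp_deck).Acyclic n {0}ᶜ :=
    Acyclic.of_mappingCone (acyclic_projectionCone_compl_zero R (n + 1)) hbase
  exact exists_boundary_eq_of_acyclic_invariantChains iterate_deck_three
    homotopyEnd_deckHomotopy_zero homotopyEnd_deckHomotopy_one proj_comp_deck proj_ne_zero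
    hinvariant hz hdz

end Boxes

end ZPunct

section Comparison

open FaceSystem

variable {X : Type} [TopologicalSpace X]

/-- The singular chains of degree `n` as chains on the simplices with `n + 1` vertices. -/
def toChains (X : Type) [TopologicalSpace X] (n : ℕ) :
    (singularChainComplex X).X n →ₗ[ℚ] Chains ℚ (singular X) :=
  Finsupp.lmapDomain ℚ ℚ fun s =>
    ⟨n + 1, TopCat.toSSetObjEquiv (TopCat.of X) (Opposite.op (SimplexCategory.mk n)) s⟩

theorem toChains_freeMk {n : ℕ}
    (s : (TopCat.toSSet.obj (TopCat.of X)).obj (Opposite.op (SimplexCategory.mk n))) :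
    toChains X n (ModuleCat.freeMk s) = simplex (TopCat.toSSetObjEquiv _ _ s) :=
  Finsupp.mapDomain_single

theorem toChains_injective (n : ℕ) : Function.Injective (toChains X n) :=
  Finsupp.mapDomain_injective fun _ _ h => (TopCat.toSSetObjEquiv _ _).injective (by simpa using h)

theorem toChains_mem (n : ℕ) (c : (singularChainComplex X).X n) :
    toChains X n c ∈ chainsOn ℚ (simplicesIn (n + 1) Set.univ) := by
  have hc : toChains X n c ∈ (Finsupp.supported ℚ ℚ Set.univ).map (toChains X n) :=
    Submodule.mem_map_of_mem (Finsupp.supported_univ.ge Submodule.mem_top)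
  refine Finsupp.supported_mono ?_ ((Finsupp.lmapDomain_supported ℚ ℚ _ Set.univ).le hc)
  rintro _ ⟨s, -, rfl⟩
  exact ⟨by push_cast; rfl, fun _ => trivial⟩

theorem exists_toChains_eq {n : ℕ} {c : Chains ℚ (singular X)}
    (hc : c ∈ chainsOn ℚ (simplicesIn (n + 1) Set.univ)) : ∃ c', toChains X n c' = c := by
  suffices h : c ∈ LinearMap.range (toChains X n) from h
  refine map_mem_of_mem_chainsOn LinearMap.id (fun k s hs => ?_) hc
  obtain rfl : k = n + 1 := by exact_mod_cast hs.1
  exact ⟨ModuleCat.freeMk ((TopCat.toSSetObjEquiv (TopCat.of X)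
    (Opposite.op (SimplexCategory.mk n))).symm s), by
      rw [toChains_freeMk, Equiv.apply_symm_apply, LinearMap.id_apply]⟩

theorem sum_zsmul_free_map_freeMk {A B : Type} {m : ℕ} (f : Fin m → (A ⟶ B)) (a : A) :
    (∑ i : Fin m, ((-1 : ℤ) ^ (i : ℕ)) • (ModuleCat.free ℚ).map (f i)).hom (ModuleCat.freeMk a) =
      ∑ i : Fin m, (-1 : ℚ) ^ (i : ℕ) • ModuleCat.freeMk (f i a) := by
  rw [ModuleCat.hom_sum, LinearMap.sum_apply]
  refine Finset.sum_congr rfl fun i _ => ?_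
  rw [ModuleCat.hom_zsmul, LinearMap.smul_apply, ← Int.cast_smul_eq_zsmul ℚ]
  push_cast
  exact congrArg _ (ModuleCat.free_map_apply _ _)

theorem d_freeMk {n : ℕ}
    (s : (TopCat.toSSet.obj (TopCat.of X)).obj (Opposite.op (SimplexCategory.mk (n + 1)))) :
    (singularChainComplex X).d (n + 1) n (ModuleCat.freeMk s) =
      ∑ i : Fin (n + 2), (-1 : ℚ) ^ (i : ℕ) •
        ModuleCat.freeMk ((TopCat.toSSet.obj (TopCat.of X)).δ i s) :=
  (LinearMap.congr_fun (congrArg ModuleCat.Hom.hom (alternatingFaceMapComplex_obj_d _ n)) _).trans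
    (sum_zsmul_free_map_freeMk (fun i => (TopCat.toSSet.obj (TopCat.of X)).δ i) s)

theorem boundary_toChains {n : ℕ} (c : (singularChainComplex X).X (n + 1)) :
    boundary (toChains X (n + 1) c) = toChains X n ((singularChainComplex X).d (n + 1) n c) := by
  suffices h : boundary ∘ₗ toChains X (n + 1) =
      toChains X n ∘ₗ ((singularChainComplex X).d (n + 1) n).hom from LinearMap.congr_fun h c
  refine Finsupp.lhom_ext' fun s => LinearMap.ext_ring ?_
  refine .trans ?_ ((congrArg (toChains X n) (d_freeMk s)).trans (map_sum _ _ _)).symm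
  change boundary (toChains X (n + 1) (ModuleCat.freeMk s)) = _
  rw [toChains_freeMk, boundary_simplex_succ]
  refine Finset.sum_congr rfl fun i _ => ?_
  exact .symm <| (map_smul _ _ _).trans (congrArg _ (toChains_freeMk _))

theorem exact_singularChainComplex {n : ℕ}
    (h : ∀ z ∈ chainsOn ℚ (simplicesIn (n + 2) (Set.univ : Set X)), boundary z = 0 →
      ∃ w ∈ chainsOn ℚ (simplicesIn (n + 2 + 1) (Set.univ : Set X)), boundary w = z) :
    Function.Exact ((singularChainComplex X).d (n + 2) (n + 1)).hom
      ((singularChainComplex X).d (n + 1) n).hom := by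
  refine fun z => ⟨fun hz => ?_, ?_⟩
  · have hz' : toChains X (n + 1) z ∈ chainsOn ℚ (simplicesIn (n + 2) Set.univ) := by
      convert toChains_mem (n + 1) z using 3
      push_cast
      ring
    obtain ⟨w, hw, hwz⟩ := h _ hz'
      ((boundary_toChains z).trans ((congrArg _ hz).trans (map_zero _)))
    obtain ⟨w', rfl⟩ := exists_toChains_eq (n := n + 2) (by exact_mod_cast hw)
    rw [boundary_toChains] at hwz
    exact ⟨w', toChains_injective _ hwz⟩
  · rintro ⟨w, rfl⟩
    exact LinearMap.congr_fun
      (congrArg ModuleCat.Hom.hom ((singularChainComplex X).d_comp_d (n + 2) (n + 1) n)) w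

theorem subsingleton_homology_singularCochainComplex {n : ℕ}
    (h : Function.Exact ((singularChainComplex X).d (n + 2) (n + 1)).hom
      ((singularChainComplex X).d (n + 1) n).hom) :
    Subsingleton ((singularCochainComplex X).homology (n + 1)) := by
  refine ModuleCat.subsingleton_of_isZero (HomologicalComplex.ExactAt.isZero_homology ?_)
  rw [HomologicalComplex.exactAt_iff' _ n (n + 1) (n + 2)
    (ComplexShape.prev_eq' _ (by simp)) (ComplexShape.next_eq' _ (by simp)),
    ShortComplex.moduleCat_exact_iff]
  intro (f : (singularChainComplex X).X (n + 1) ⟶ ModuleCat.of ℚ ℚ)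
    (hf : (singularChainComplex X).d (n + 2) (n + 1) ≫ f = 0)
  have hker : f.hom ∈
      (LinearMap.ker ((singularChainComplex X).d (n + 1) n).hom).dualAnnihilator := by
    refine (Submodule.mem_dualAnnihilator _).2 fun z hz => ?_
    obtain ⟨w, rfl⟩ := (h z).1 hz
    exact LinearMap.congr_fun (congrArg ModuleCat.Hom.hom hf) w
  rw [← LinearMap.range_dualMap_eq_dualAnnihilator_ker] at hker
  obtain ⟨g, hg⟩ := hker
  exact ⟨(ModuleCat.ofHom g : (singularChainComplex X).X n ⟶ ModuleCat.of ℚ ℚ),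
    ModuleCat.hom_ext hg⟩

end Comparison

theorem stmt10_general {n : ℕ} (hpos : 1 ≤ n) (hn : n ≤ 4) :
    Subsingleton ((singularCochainComplex ZPunct).homology n) := by
  obtain ⟨m, rfl⟩ := Nat.exists_eq_add_of_le' hpos
  have : Invertible ((3 : ℕ) : ℚ) := invertibleOfNonzero (by norm_num)
  exact subsingleton_homology_singularCochainComplex <| exact_singularChainComplex
    fun z hz hdz => ZPunct.exists_boundary_eq (by lia) hz hdz

/-- For the affine hypersurface `Z : x₄³ = x₁x₂x₃(x₁+x₂+x₃)` in `ℂ⁴`,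
the singular cohomology groups `H²(Z ∖ {0}; ℚ)` and `H³(Z ∖ {0}; ℚ)` both vanish
(equivalently, since `ℚ` is a field, the singular homology groups `H₂` and `H₃` of
`Z ∖ {0}` with `ℚ`-coefficients vanish). -/
theorem stmt10 :
    Subsingleton ((singularCochainComplex ZPunct).homology 2) ∧
    Subsingleton ((singularCochainComplex ZPunct).homology 3) :=
  ⟨stmt10_general (by norm_num) (by norm_num), stmt10_general (by norm_num) (by norm_num)⟩
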